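/- Let d ≥ 5, let M ∈ ℕ with M < d/2 − 1, let m ∈ ℝ, L ≥ 1, and let q be a real number with 0 < q ≤ C·L for some C > 0. Then for any δ > 0 and any w ∈ C^{M,d+1}(ℝ^d): I_q(0; A, m, L) = L^d·σ_∞(w; A, m) + O_{m,M,C,δ}( q^{M−δ} L^{d−M+δ} ‖w‖_{M,d+1} ), where I_q(0; A, m, L) := L^d ∫_{ℝ^d} w(z) h(q/L, F^m(z)) dz. -/

import Mathlib

open MeasureTheory Filter Topology Set
open scoped BigOperators Classical

noncomputable section

/-- `e_q(x) := exp(2πix/q)`. -/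
def eFun (q : ℕ) (x : ℝ) : ℂ := Complex.exp (2 * Real.pi * Complex.I * x / q)

/-- `F(z) = (1/2)⟨Az, z⟩` for an integer matrix `A`. -/
def Fq {d : ℕ} (A : Matrix (Fin d) (Fin d) ℤ) (z : Fin d → ℝ) : ℝ :=
  (1 / 2) * ∑ i, ∑ j, (A i j : ℝ) * z i * z j

/-- The exponential sum `S_q(c; A, t)`. -/
def Sq {d : ℕ} (q : ℕ) (c : Fin d → ℤ) (A : Matrix (Fin d) (Fin d) ℤ) (t : ℤ) : ℂ :=
  ∑ a ∈ (Finset.range q).filter (fun a => Nat.Coprime a q),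
    ∑ b : Fin d → Fin q,
      eFun q ((a : ℝ) * (Fq A (fun i => (b i : ℝ)) - (t : ℝ)) + ∑ i, (c i : ℝ) * (b i : ℝ))

/-- `σ_p(A,t) = Σ_l p^{-dl} S_{p^l}(0; A, t)`. -/
def sigmaP {d : ℕ} (p : ℕ) (A : Matrix (Fin d) (Fin d) ℤ) (t : ℤ) : ℂ :=
  ∑' l : ℕ, ((p : ℂ) ^ (d * l))⁻¹ * Sq (p ^ l) 0 A t

/-- `σ(A,t) = Π_p σ_p(A,t)`. -/
def sigmaA {d : ℕ} (A : Matrix (Fin d) (Fin d) ℤ) (t : ℤ) : ℂ :=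
  ∏' p : Nat.Primes, sigmaP (p : ℕ) A t

/-- `σ*(A) = Π_p (1 - p⁻¹) σ_p(A,0)`. -/
def sigmaStar {d : ℕ} (A : Matrix (Fin d) (Fin d) ℤ) : ℂ :=
  ∏' p : Nat.Primes, (1 - ((p : ℕ) : ℂ)⁻¹) * sigmaP (p : ℕ) A 0

/-- The weight `w₀`. -/
def wZero (x : ℝ) : ℝ := if |x| < 1 then Real.exp (1 / (x ^ 2 - 1)) else 0

def cZero : ℝ := ∫ x : ℝ, wZero x

def omegaFun (x : ℝ) : ℝ := (4 / cZero) * wZero (4 * x - 3)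

/-- The function `h(x,y) = Σ_{j≥1} (1/(xj)) [ω(xj) − ω(|y|/(xj))]`. -/
def hFun (x y : ℝ) : ℝ :=
  ∑' j : ℕ, (1 / (x * ((j : ℝ) + 1))) *
    (omegaFun (x * ((j : ℝ) + 1)) - omegaFun (|y| / (x * ((j : ℝ) + 1))))

/-- Japanese bracket `⟨z⟩ = max(1, ‖z‖)`. -/
def jap {d : ℕ} (z : Fin d → ℝ) : ℝ := max 1 ‖z‖

def normSet {d : ℕ} (n1 : ℕ) (n2 : ℝ) (f : (Fin d → ℝ) → ℝ) : Set ℝ :=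
  {r | ∃ (k : ℕ) (z : Fin d → ℝ), k ≤ n1 ∧ r = ‖iteratedFDeriv ℝ k f z‖ * jap z ^ n2}

/-- The norm `‖f‖_{n1,n2}`. -/
def wNorm {d : ℕ} (n1 : ℕ) (n2 : ℝ) (f : (Fin d → ℝ) → ℝ) : ℝ := sSup (normSet n1 n2 f)

/-- Membership in the class `C^{n1,n2}`. -/
def MemC {d : ℕ} (n1 : ℕ) (n2 : ℝ) (f : (Fin d → ℝ) → ℝ) : Prop :=
  ContDiff ℝ n1 f ∧ BddAbove (normSet n1 n2 f)

def jap1 (y : ℝ) : ℝ := max 1 |y|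

def normSet1 (n1 : ℕ) (n2 : ℝ) (f : ℝ → ℝ) : Set ℝ :=
  {r | ∃ (k : ℕ) (y : ℝ), k ≤ n1 ∧ r = |iteratedDeriv k f y| * jap1 y ^ n2}

def wNorm1 (n1 : ℕ) (n2 : ℝ) (f : ℝ → ℝ) : ℝ := sSup (normSet1 n1 n2 f)

def MemC1 (n1 : ℕ) (n2 : ℝ) (f : ℝ → ℝ) : Prop :=
  ContDiff ℝ n1 f ∧ BddAbove (normSet1 n1 n2 f)

/-- `N_L(w; A, m) = Σ_{z ∈ L⁻¹ℤ^d, F(z)=m} w(z)`. -/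
def NL {d : ℕ} (A : Matrix (Fin d) (Fin d) ℤ) (L m : ℝ) (w : (Fin d → ℝ) → ℝ) : ℝ :=
  ∑' v : Fin d → ℤ,
    if Fq A (fun i => (v i : ℝ) / L) = m then w (fun i => (v i : ℝ) / L) else 0

/-- `σ_∞(w; A, m)` as a limit. -/
def IsSigmaInf {d : ℕ} (A : Matrix (Fin d) (Fin d) ℤ) (m : ℝ) (w : (Fin d → ℝ) → ℝ)
    (s : ℝ) : Prop :=
  Tendsto (fun ε : ℝ => (1 / (2 * ε)) * ∫ z in {z : Fin d → ℝ | |Fq A z - m| ≤ ε}, w z)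
    (nhdsWithin 0 (Set.Ioi 0)) (nhds s)

def intCast' {d : ℕ} (c : Fin d → ℤ) : Fin d → ℝ := fun i => (c i : ℝ)

/-- the matrix of `F_d(x,y) = Σ x_i y_i` on `ℤ^{2s}`. -/
def Ad (s : ℕ) : Matrix (Fin (2 * s)) (Fin (2 * s)) ℤ :=
  fun i j => if i.val + s = j.val ∨ j.val + s = i.val then 1 else 0

/-- `F(z) = (1/2)⟨Az, z⟩` for a real matrix `A`. -/
def FqR {d : ℕ} (A : Matrix (Fin d) (Fin d) ℝ) (z : Fin d → ℝ) : ℝ :=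
  (1 / 2) * ∑ i, ∑ j, A i j * z i * z j

/-!
Write `x = q / L`. By Poisson summation `h x y = x⁻¹ κ (y / x)` up to `O(x ^ N)` for every `N`,
where `κ` is continuous, rapidly decaying and of mass one, and `κ y - 2 κ (2 y)` has vanishing
moments of all orders. The theorem thus compares averages of `w` against `x⁻¹ κ ((F - m) / x)` at
the scales `x` and `x / 2`. The vector field `b z = |z|⁻² A⁻¹ z` satisfies `b · ∇F = 1`, so a kernel
of mass zero may be replaced by its primitive at the price of differentiating `w` along `b`: each
such step gains a factor `x` and costs a singularity `|z|⁻²` at the origin, and `M` of them are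
affordable because `2 M + 2 < d`. The remaining integral is bounded by one more integration by
parts, against `arctan`. Summing over dyadic scales gives the rate; the limit is `σ_∞` because the
same argument compares `κ` with the tent kernel, a superposition of the shell averages that define
`σ_∞`.
-/

/-! ### Riemann sums of smooth functions -/

section PoissonSummation

open scoped FourierTransform SchwartzMap

theorem fourier_comp_mul_left (f : ℝ → ℂ) {x : ℝ} (hx : 0 < x) (ξ : ℝ) :
    𝓕 (fun t => f (x * t)) ξ = (x : ℂ)⁻¹ * 𝓕 f (ξ / x) := by
  simp only [Real.fourier_real_eq_integral_exp_smul]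
  have substitution := Measure.integral_comp_mul_left
    (fun v : ℝ => Complex.exp (↑(-2 * Real.pi * v * (ξ / x)) * Complex.I) • f v) x
  rw [abs_of_pos (inv_pos.2 hx)] at substitution
  rw [← Complex.ofReal_inv, ← Complex.real_smul, ← substitution]
  have phase (v : ℝ) : -2 * Real.pi * (x * v) * (ξ / x) = -2 * Real.pi * v * ξ := by field_simp
  simp only [phase]

theorem mul_tsum_eq_tsum_fourier_div (f : 𝓢(ℝ, ℂ)) {x : ℝ} (hx : 0 < x) :
    (x : ℂ) * ∑' n : ℤ, f (x * n) = ∑' n : ℤ, 𝓕 f (n / x) := by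
  have hx' : (x : ℂ) ≠ 0 := mod_cast hx.ne'
  let dilation : ℝ ≃L[ℝ] ℝ := ContinuousLinearEquiv.smulLeft (Units.mk0 x hx.ne')
  let g : 𝓢(ℝ, ℂ) := SchwartzMap.compCLMOfContinuousLinearEquiv ℂ dilation f
  have fourier_g (ξ : ℝ) : 𝓕 g ξ = (x : ℂ)⁻¹ * 𝓕 f (ξ / x) := by
    rw [SchwartzMap.fourier_coe, SchwartzMap.fourier_coe]
    exact fourier_comp_mul_left f hx ξ
  have poisson : ∑' n : ℤ, f (x * n) = ∑' n : ℤ, (x : ℂ)⁻¹ * 𝓕 f (n / x) := by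
    simpa [fourier_g, g, dilation, Units.smul_def] using g.tsum_eq_tsum_fourier 0
  rw [poisson, tsum_mul_left, mul_inv_cancel_left₀ hx']

theorem exists_norm_schwartz_div_le (f : 𝓢(ℝ, ℂ)) (N : ℕ) :
    ∃ C : ℝ, 0 ≤ C ∧ ∀ x : ℝ, 0 < x → ∀ n : ℤ, n ≠ 0 →
      ‖f (n / x)‖ ≤ C * |1 / (n : ℝ) ^ N| * x ^ N := by
  obtain ⟨C, hC, decay⟩ := f.decay N 0
  refine ⟨C, hC.le, fun x hx n hn => ?_⟩
  have : 0 < |(n : ℝ)| := abs_pos.2 (mod_cast hn)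
  have at_point := decay (n / x)
  rw [norm_iteratedFDeriv_zero, norm_div, Real.norm_eq_abs, Real.norm_eq_abs, abs_of_pos hx,
    div_pow, ← le_div_iff₀' (by positivity)] at at_point
  refine at_point.trans_eq ?_
  rw [abs_div, abs_one, abs_pow]
  field_simp

theorem exists_norm_mul_tsum_sub_integral_le (f : 𝓢(ℝ, ℂ)) {N : ℕ} (hN : 2 ≤ N) :
    ∃ C : ℝ, 0 ≤ C ∧ ∀ x : ℝ, 0 < x →
      ‖(x : ℂ) * ∑' n : ℤ, f (x * n) - ∫ t, f t‖ ≤ C * x ^ N := by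
  obtain ⟨C, hC, decay⟩ := exists_norm_schwartz_div_le (𝓕 f) N
  have majorant : Summable fun n : ℤ => C * |1 / (n : ℝ) ^ N| :=
    (Real.summable_one_div_int_pow.2 (by lia)).abs.mul_left C
  refine ⟨∑' n : ℤ, C * |1 / (n : ℝ) ^ N|, tsum_nonneg fun n => by positivity, fun x hx => ?_⟩
  have fourier_zero : 𝓕 f 0 = ∫ t, f t := by
    simp [SchwartzMap.fourier_coe, Real.fourier_real_eq_integral_exp_smul]
  have off_zero (n : ℤ) : ‖if n = 0 then 0 else 𝓕 f (n / x)‖ ≤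
      C * |1 / (n : ℝ) ^ N| * x ^ N := by
    split_ifs with hn
    · simpa using by positivity
    · exact decay x hx n hn
  have summable_fourier : Summable fun n : ℤ => 𝓕 f (n / x) :=
    .of_norm_bounded_eventually (majorant.mul_right (x ^ N)) <| by
      filter_upwards [(Set.finite_singleton (0 : ℤ)).compl_mem_cofinite] with n hn
      exact decay x hx n hn
  rw [mul_tsum_eq_tsum_fourier_div f hx, summable_fourier.tsum_eq_add_tsum_ite 0, Int.cast_zero,
    zero_div, fourier_zero, add_sub_cancel_left, ← tsum_mul_right]
  exact tsum_of_norm_bounded (majorant.mul_right (x ^ N)).hasSum off_zero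

theorem exists_abs_mul_tsum_sub_integral_le {g : ℝ → ℝ} (hg : ContDiff ℝ (⊤ : ℕ∞) g)
    (hc : HasCompactSupport g) {N : ℕ} (hN : 2 ≤ N) :
    ∃ C : ℝ, 0 ≤ C ∧ ∀ x : ℝ, 0 < x → |x * ∑' n : ℤ, g (x * n) - ∫ t, g t| ≤ C * x ^ N := by
  have hc' : HasCompactSupport fun t => (g t : ℂ) := hc.comp_left Complex.ofReal_zero
  let f : 𝓢(ℝ, ℂ) := hc'.toSchwartzMap (Complex.ofRealCLM.contDiff.comp hg)
  obtain ⟨C, hC, bound⟩ := exists_norm_mul_tsum_sub_integral_le f hN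
  refine ⟨C, hC, fun x hx => ?_⟩
  have complexify : ((x * ∑' n : ℤ, g (x * n) - ∫ t, g t : ℝ) : ℂ) =
      x * ∑' n : ℤ, f (x * n) - ∫ t, f t := by
    push_cast [← integral_complex_ofReal]
    rfl
  rw [← Real.norm_eq_abs, ← Complex.norm_real, complexify]
  exact bound x hx

theorem finite_support_comp_mul_intCast {g : ℝ → ℝ} (hc : HasCompactSupport g) {x : ℝ}
    (hx : 0 < x) : (Function.support fun n : ℤ => g (x * n)).Finite := by
  obtain ⟨R, hR⟩ := hc.isCompact.isBounded.subset_closedBall 0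
  refine (Set.finite_Icc (-⌈R / x⌉) ⌈R / x⌉).subset fun n hn => abs_le.1 ?_
  have hnR : x * n ∈ Metric.closedBall (0 : ℝ) R := hR (subset_tsupport _ hn)
  rw [mem_closedBall_zero_iff, Real.norm_eq_abs, abs_mul, abs_of_pos hx, ← le_div_iff₀' hx] at hnR
  exact_mod_cast hnR.trans (Int.le_ceil _)

theorem exists_abs_mul_tsum_succ_sub_le_of_even {g : ℝ → ℝ} (hg : ContDiff ℝ (⊤ : ℕ∞) g)
    (hc : HasCompactSupport g) (he : g.Even) {N : ℕ} (hN : 2 ≤ N) :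
    ∃ C : ℝ, 0 ≤ C ∧ ∀ x : ℝ, 0 < x →
      |x * ∑' j : ℕ, g (x * ((j : ℝ) + 1)) - ((∫ t, g t) - x * g 0) / 2| ≤ C * x ^ N := by
  obtain ⟨C, hC, bound⟩ := exists_abs_mul_tsum_sub_integral_le hg hc hN
  refine ⟨C, hC, fun x hx => ?_⟩
  have fold : ∑' n : ℤ, g (x * n) = g 0 + 2 * ∑' j : ℕ, g (x * ((j : ℝ) + 1)) := by
    rw [tsum_int_eq_zero_add_two_mul_tsum_pnat (f := fun n : ℤ => g (x * n))
      (fun n => by simp [he (x * n)])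
      (summable_of_hasFiniteSupport (finite_support_comp_mul_intCast hc hx))]
    have reindex := tsum_pnat_eq_tsum_succ (f := fun n : ℕ => g (x * n))
    push_cast at reindex
    simp [reindex]
  have double := bound x hx
  rw [fold] at double
  set S := ∑' j : ℕ, g (x * ((j : ℝ) + 1))
  calc |x * S - ((∫ t, g t) - x * g 0) / 2|
      = |x * (g 0 + 2 * S) - ∫ t, g t| / 2 := by rw [← abs_two, ← abs_div]; ring_nf
    _ ≤ |x * (g 0 + 2 * S) - ∫ t, g t| := half_le_self (abs_nonneg _)
    _ ≤ C * x ^ N := double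

end PoissonSummation

/-! ### Rapidly decaying functions and their primitives -/

/-- Continuous functions on the line that decay faster than every power. -/
structure HasRapidDecay (g : ℝ → ℝ) : Prop where
  continuous : Continuous g
  decay : ∀ n : ℕ, ∃ C : ℝ, ∀ y, |y| ^ n * |g y| ≤ C

namespace HasRapidDecay

variable {f g : ℝ → ℝ}

theorem of_two_le (hc : Continuous g)
    (h : ∀ n : ℕ, 2 ≤ n → ∃ C : ℝ, ∀ y, |y| ^ n * |g y| ≤ C) : HasRapidDecay g where
  continuous := hc
  decay n := by
    obtain ⟨C₁, outside⟩ := h (n + 2) (by lia)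
    obtain ⟨C₂, inside⟩ := (isCompact_Icc (a := (-1 : ℝ)) (b := 1)).exists_bound_of_continuousOn
      hc.continuousOn
    refine ⟨max C₁ C₂, fun y => ?_⟩
    rcases le_total |y| 1 with hy | hy
    · calc |y| ^ n * |g y| ≤ 1 * |g y| := by gcongr; exact pow_le_one₀ (abs_nonneg _) hy
        _ ≤ C₂ := by simpa using inside y (abs_le.1 hy)
        _ ≤ max C₁ C₂ := le_max_right _ _
    · calc |y| ^ n * |g y| ≤ |y| ^ (n + 2) * |g y| := by gcongr; lia
        _ ≤ C₁ := outside y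
        _ ≤ max C₁ C₂ := le_max_left _ _

theorem exists_le_inv_one_add_sq (hg : HasRapidDecay g) (n : ℕ) :
    ∃ C : ℝ, ∀ y, |y| ^ n * |g y| ≤ C * (1 + y ^ 2)⁻¹ := by
  obtain ⟨C₁, h₁⟩ := hg.decay n
  obtain ⟨C₂, h₂⟩ := hg.decay (n + 2)
  refine ⟨C₁ + C₂, fun y => ?_⟩
  rw [← div_eq_mul_inv, le_div_iff₀ (by positivity)]
  calc |y| ^ n * |g y| * (1 + y ^ 2) = |y| ^ n * |g y| + |y| ^ (n + 2) * |g y| := by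
        rw [pow_add, sq_abs]; ring
    _ ≤ C₁ + C₂ := add_le_add (h₁ y) (h₂ y)

theorem integrable_pow_mul (hg : HasRapidDecay g) (n : ℕ) : Integrable fun y => y ^ n * g y := by
  obtain ⟨C, bound⟩ := hg.exists_le_inv_one_add_sq n
  refine (integrable_inv_one_add_sq.const_mul C).mono'
    ((continuous_id.pow n).mul hg.continuous).aestronglyMeasurable (.of_forall fun y => ?_)
  simpa [abs_mul, abs_pow] using bound y

theorem integrable (hg : HasRapidDecay g) : Integrable g := by
  simpa using hg.integrable_pow_mul 0

theorem sub (hf : HasRapidDecay f) (hg : HasRapidDecay g) :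
    HasRapidDecay fun y => f y - g y where
  continuous := hf.continuous.sub hg.continuous
  decay n := by
    obtain ⟨C₁, h₁⟩ := hf.decay n
    obtain ⟨C₂, h₂⟩ := hg.decay n
    refine ⟨C₁ + C₂, fun y => ?_⟩
    calc |y| ^ n * |f y - g y| ≤ |y| ^ n * (|f y| + |g y|) := by gcongr; exact abs_sub _ _
      _ ≤ C₁ + C₂ := by rw [mul_add]; exact add_le_add (h₁ y) (h₂ y)

theorem mul_comp_mul (hg : HasRapidDecay g) {a : ℝ} (ha : a ≠ 0) :
    HasRapidDecay fun y => a * g (a * y) where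
  continuous := continuous_const.mul (hg.continuous.comp (continuous_const_mul a))
  decay n := by
    obtain ⟨C, bound⟩ := hg.decay n
    refine ⟨|a| / |a| ^ n * C, fun y => ?_⟩
    have ha' : |a| ≠ 0 := abs_ne_zero.2 ha
    calc |y| ^ n * |a * g (a * y)| = |a| / |a| ^ n * (|a * y| ^ n * |g (a * y)|) := by
          rw [abs_mul, abs_mul, mul_pow]; field_simp
      _ ≤ |a| / |a| ^ n * C := by gcongr; exact bound _

end HasRapidDecay

/-- The primitive of `g` vanishing at `-∞`. -/
def primitive (g : ℝ → ℝ) (y : ℝ) : ℝ := ∫ s in Iic y, g s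

section Primitive

variable {g : ℝ → ℝ}

theorem hasDerivAt_primitive (hc : Continuous g) (hi : Integrable g) (y : ℝ) :
    HasDerivAt (primitive g) (g y) y := by
  have shift : primitive g = fun y => primitive g 0 + ∫ s in (0 : ℝ)..y, g s := by
    ext y
    rw [← intervalIntegral.integral_Iic_sub_Iic hi.integrableOn hi.integrableOn]
    exact (add_sub_cancel _ _).symm
  rw [shift]
  exact (intervalIntegral.integral_hasDerivAt_right (hc.intervalIntegrable 0 y)
    hc.stronglyMeasurable.stronglyMeasurableAtFilter hc.continuousAt).const_add _

namespace HasRapidDecay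

theorem pow_mul_abs_setIntegral_le (hg : HasRapidDecay g) (n : ℕ) {y : ℝ} {S : Set ℝ}
    (hS : MeasurableSet S) (hy : ∀ s ∈ S, |y| ≤ |s|) :
    |y| ^ n * |∫ s in S, g s| ≤ ∫ s, |s| ^ n * |g s| := by
  have moment : Integrable fun s => |s| ^ n * |g s| := by
    simpa [abs_mul, abs_pow] using (hg.integrable_pow_mul n).abs
  calc |y| ^ n * |∫ s in S, g s| ≤ |y| ^ n * ∫ s in S, |g s| := by
        gcongr; exact abs_integral_le_integral_abs
    _ = ∫ s in S, |y| ^ n * |g s| := by rw [integral_const_mul]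
    _ ≤ ∫ s in S, |s| ^ n * |g s| := by
        refine setIntegral_mono_on (hg.integrable.abs.const_mul _).integrableOn
          moment.integrableOn hS fun s hs => ?_
        have hpow := pow_le_pow_left₀ (abs_nonneg y) (hy s hs) n
        exact mul_le_mul_of_nonneg_right hpow (abs_nonneg _)
    _ ≤ ∫ s, |s| ^ n * |g s| :=
        setIntegral_le_integral moment (.of_forall fun s => by positivity)

theorem primitive_of_integral_eq_zero (hg : HasRapidDecay g) (h0 : ∫ y, g y = 0) :
    HasRapidDecay (primitive g) where
  continuous := continuous_iff_continuousAt.2 fun y =>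
    (hasDerivAt_primitive hg.continuous hg.integrable y).continuousAt
  decay n := by
    refine ⟨∫ s, |s| ^ n * |g s|, fun y => ?_⟩
    rcases le_total y 0 with hy | hy
    · refine hg.pow_mul_abs_setIntegral_le n measurableSet_Iic fun s (hs : s ≤ y) => ?_
      rw [abs_of_nonpos hy, abs_of_nonpos (hs.trans hy)]
      exact neg_le_neg hs
    · have split := intervalIntegral.integral_Iic_add_Ioi (b := y) hg.integrable.integrableOn
        hg.integrable.integrableOn
      rw [h0] at split
      rw [primitive, eq_neg_of_add_eq_zero_left split, abs_neg]
      refine hg.pow_mul_abs_setIntegral_le n measurableSet_Ioi fun s (hs : y < s) => ?_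
      rw [abs_of_nonneg hy, abs_of_nonneg (hy.trans hs.le)]
      exact hs.le

theorem integral_pow_mul_primitive (hg : HasRapidDecay g) (h0 : ∫ y, g y = 0) (i : ℕ) :
    ∫ y, y ^ i * primitive g y = -(∫ y, y ^ (i + 1) * g y) / ((i : ℝ) + 1) := by
  have hG := hg.primitive_of_integral_eq_zero h0
  have parts := integral_mul_deriv_eq_deriv_mul_of_integrable
    (u := fun y : ℝ => y ^ (i + 1)) (u' := fun y => ((i : ℝ) + 1) * y ^ i)
    (v := primitive g) (v' := g) (fun y _ => by simpa using hasDerivAt_pow (i + 1) y)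
    (fun y _ => hasDerivAt_primitive hg.continuous hg.integrable y)
    (hg.integrable_pow_mul (i + 1))
    (by simpa [mul_assoc, Pi.mul_def] using (hG.integrable_pow_mul i).const_mul ((i : ℝ) + 1))
    (hG.integrable_pow_mul (i + 1))
  simp only [mul_assoc, integral_const_mul] at parts
  rw [parts, neg_neg, mul_div_cancel_left₀ _ (by positivity)]

end HasRapidDecay

end Primitive

/-! ### The weight `ω` -/

theorem wZero_eq_expNegInvGlue (x : ℝ) : wZero x = expNegInvGlue (1 - x ^ 2) := by
  unfold wZero expNegInvGlue
  rcases lt_or_ge |x| 1 with h | h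
  · have hx : x ^ 2 < 1 := (sq_lt_one_iff_abs_lt_one x).2 h
    rw [if_pos h, if_neg (by linarith), ← neg_sub, one_div, inv_neg]
  · have hx : 1 ≤ x ^ 2 := (one_le_sq_iff_one_le_abs x).2 h
    rw [if_neg h.not_gt, if_pos (by linarith)]

theorem contDiff_wZero : ContDiff ℝ (⊤ : ℕ∞) wZero := by
  rw [funext wZero_eq_expNegInvGlue]
  exact expNegInvGlue.contDiff.comp (by fun_prop)

theorem wZero_nonneg (x : ℝ) : 0 ≤ wZero x := by
  unfold wZero
  split_ifs <;> positivity

theorem hasCompactSupport_of_forall_lt_abs {g : ℝ → ℝ} {R : ℝ} (h : ∀ u, R < |u| → g u = 0) :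
    HasCompactSupport g :=
  .intro (isCompact_Icc (a := -R) (b := R)) fun u hu =>
    h u (lt_of_not_ge fun h' => hu (abs_le.1 h'))

theorem cZero_pos : 0 < cZero :=
  contDiff_wZero.continuous.integral_pos_of_hasCompactSupport_nonneg_nonzero
    (hasCompactSupport_of_forall_lt_abs fun _ hu => if_neg hu.not_gt) wZero_nonneg
    (x := 0) (by simp [wZero])

theorem contDiff_omegaFun : ContDiff ℝ (⊤ : ℕ∞) omegaFun :=
  contDiff_const.mul (contDiff_wZero.comp (by fun_prop))

theorem omegaFun_eq_zero_of_le {x : ℝ} (h : x ≤ 1 / 2) : omegaFun x = 0 := by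
  rw [omegaFun, wZero, if_neg (fun h' => by linarith [(abs_lt.1 h').1]), mul_zero]

theorem omegaFun_eq_zero_of_ge {x : ℝ} (h : 1 ≤ x) : omegaFun x = 0 := by
  rw [omegaFun, wZero, if_neg (fun h' => by linarith [(abs_lt.1 h').2]), mul_zero]

theorem integral_omegaFun : ∫ x, omegaFun x = 1 := by
  have translate : ∫ x, wZero (4 * x - 3) = ∫ x, wZero (4 * x) := by
    rw [← integral_sub_right_eq_self (fun x => wZero (4 * x)) (3 / 4)]
    ring_nf
  have scale : ∫ x, wZero (4 * x) = 4⁻¹ * cZero := by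
    rw [Measure.integral_comp_mul_left, abs_of_pos (by norm_num), smul_eq_mul, cZero]
  unfold omegaFun
  rw [integral_const_mul, translate, scale]
  field [cZero_pos.ne']

theorem contDiff_comp_abs {f p : ℝ → ℝ} {r : ℝ} (hr : 0 < r)
    (hf : ∀ u, 0 < u → ContDiffAt ℝ (⊤ : ℕ∞) f u) (hp : ContDiff ℝ (⊤ : ℕ∞) p)
    (h : ∀ u, |u| < r → f |u| = p u) : ContDiff ℝ (⊤ : ℕ∞) fun u => f |u| := by
  refine contDiff_iff_contDiffAt.2 fun u => ?_
  rcases eq_or_ne u 0 with rfl | hu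
  · refine hp.contDiffAt.congr_of_eventuallyEq ?_
    filter_upwards [continuous_abs.continuousAt.eventually_lt continuousAt_const
      (by simpa using hr)] with u hu using h u hu
  · exact (hf |u| (abs_pos.2 hu)).comp u (contDiffAt_abs hu)

/-! ### The kernel `κ` -/

/-- The logarithmic mass `∫ ω(v) dv / v`, the common limit of `omegaSum` at `0` and of
`omegaRecipSum` at infinity. -/
def omegaLogMass : ℝ := ∫ v in Ioi (0 : ℝ), omegaFun v / v

/-- The `y`-independent part `∑_{j ≥ 1} ω(xj) / j` of `x * hFun x y`. -/
def omegaSum (x : ℝ) : ℝ := ∑' j : ℕ, omegaFun (x * ((j : ℝ) + 1)) / ((j : ℝ) + 1)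

/-- The `y`-dependent part `∑_{j ≥ 1} ω(|y| / j) / j` of `x * hFun x (x * y)`. -/
def omegaRecipSum (y : ℝ) : ℝ := ∑' j : ℕ, omegaFun (|y| / ((j : ℝ) + 1)) / ((j : ℝ) + 1)

/-- The approximate identity `κ` for which `h(x, y) = x⁻¹ κ(y / x)` up to `O(x ^ N)` for all `N`. -/
def hKernel (y : ℝ) : ℝ := omegaLogMass - omegaRecipSum y

theorem exists_abs_omegaSum_sub_le_of_two_le {N : ℕ} (hN : 2 ≤ N) :
    ∃ C : ℝ, 0 ≤ C ∧ ∀ x : ℝ, 0 < x → |omegaSum x - omegaLogMass| ≤ C * x ^ N := by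
  let g : ℝ → ℝ := fun u => omegaFun |u| / |u|
  have hg : ContDiff ℝ (⊤ : ℕ∞) g :=
    contDiff_comp_abs (f := fun u => omegaFun u / u) (p := fun _ => 0) one_half_pos
      (fun u hu => contDiff_omegaFun.contDiffAt.div contDiffAt_id hu.ne') contDiff_const
      fun u hu => by rw [omegaFun_eq_zero_of_le hu.le, zero_div]
  have hc : HasCompactSupport g := hasCompactSupport_of_forall_lt_abs (R := 1)
    fun u hu => by simp only [g, omegaFun_eq_zero_of_ge hu.le, zero_div]
  obtain ⟨C, hC, bound⟩ :=
    exists_abs_mul_tsum_succ_sub_le_of_even hg hc (fun u => by simp only [g, abs_neg]) hN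
  refine ⟨C, hC, fun x hx => ?_⟩
  have riemann : x * ∑' j : ℕ, g (x * ((j : ℝ) + 1)) = omegaSum x := by
    rw [← tsum_mul_left]
    refine tsum_congr fun j => ?_
    simp only [g]
    rw [abs_of_pos (by positivity)]
    field_simp
  have integral : ((∫ t, g t) - x * g 0) / 2 = omegaLogMass := by
    simp [g, omegaLogMass, integral_comp_abs (f := fun v => omegaFun v / v)]
  rw [← riemann, ← integral]
  exact bound x hx

theorem omegaSum_eq_zero {x : ℝ} (hx : 1 ≤ x) : omegaSum x = 0 := by
  refine (tsum_congr fun j => ?_).trans tsum_zero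
  rw [omegaFun_eq_zero_of_ge (one_le_mul_of_one_le_of_one_le hx (by simp)), zero_div]

theorem exists_abs_omegaSum_sub_le (N : ℕ) :
    ∃ C : ℝ, 0 ≤ C ∧ ∀ x : ℝ, 0 < x → |omegaSum x - omegaLogMass| ≤ C * x ^ (N + 1) := by
  rcases N with _ | N
  · obtain ⟨C, hC, bound⟩ := exists_abs_omegaSum_sub_le_of_two_le le_rfl
    refine ⟨C + |omegaLogMass|, by positivity, fun x hx => ?_⟩
    rcases le_total x 1 with hx1 | hx1
    · calc |omegaSum x - omegaLogMass| ≤ C * x ^ 2 := bound x hx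
        _ ≤ (C + |omegaLogMass|) * x ^ 1 :=
          mul_le_mul (by simp) (pow_le_pow_of_le_one hx.le hx1 one_le_two) (by positivity)
            (by positivity)
    · calc |omegaSum x - omegaLogMass| = |omegaLogMass| := by simp [omegaSum_eq_zero hx1]
        _ ≤ (C + |omegaLogMass|) * 1 := by simpa using hC
        _ ≤ (C + |omegaLogMass|) * x ^ 1 := by gcongr; simpa using hx1
  · exact exists_abs_omegaSum_sub_le_of_two_le (by lia)

theorem integral_omegaFun_inv_div : ∫ u, omegaFun |u|⁻¹ / |u| = 2 * omegaLogMass := by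
  rw [integral_comp_abs (f := fun v => omegaFun v⁻¹ / v), omegaLogMass,
    ← integral_comp_rpow_Ioi (fun v => omegaFun v / v) (p := -1) (by norm_num)]
  congr 1
  refine setIntegral_congr_fun measurableSet_Ioi fun x (hx : 0 < x) => ?_
  simp only [abs_neg, abs_one, one_mul, smul_eq_mul]
  rw [Real.rpow_neg_one, show (-1 - 1 : ℝ) = ((-2 : ℤ) : ℝ) by norm_num, Real.rpow_intCast,
    zpow_neg, zpow_ofNat]
  field_simp

theorem exists_pow_mul_abs_hKernel_le {N : ℕ} (hN : 2 ≤ N) :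
    ∃ C : ℝ, ∀ y : ℝ, |y| ^ N * |hKernel y| ≤ C := by
  let g : ℝ → ℝ := fun u => omegaFun |u|⁻¹ / |u|
  have hg : ContDiff ℝ (⊤ : ℕ∞) g := by
    refine contDiff_comp_abs (f := fun u => omegaFun u⁻¹ / u) (p := fun _ => 0) one_pos
      (fun u hu => (contDiff_omegaFun.contDiffAt.comp u (contDiffAt_id.inv hu.ne')).div
        contDiffAt_id hu.ne') contDiff_const fun u hu => ?_
    rcases eq_or_ne u 0 with rfl | h0
    · simp
    · rw [omegaFun_eq_zero_of_ge ((one_le_inv₀ (abs_pos.2 h0)).2 hu.le), zero_div]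
  have hc : HasCompactSupport g := hasCompactSupport_of_forall_lt_abs (R := 2) fun u hu => by
    simp only [g]
    rw [omegaFun_eq_zero_of_le (by rw [one_div]; exact inv_anti₀ two_pos hu.le), zero_div]
  obtain ⟨C, hC, bound⟩ :=
    exists_abs_mul_tsum_succ_sub_le_of_even hg hc (fun u => by simp only [g, abs_neg]) hN
  refine ⟨C, fun y => ?_⟩
  rcases eq_or_ne y 0 with rfl | h0
  · rwa [abs_zero, zero_pow (by lia), zero_mul]
  have hy : 0 < |y| := abs_pos.2 h0
  have riemann : |y|⁻¹ * ∑' j : ℕ, g (|y|⁻¹ * ((j : ℝ) + 1)) = omegaRecipSum y := by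
    rw [← tsum_mul_left]
    refine tsum_congr fun j => ?_
    simp only [g]
    rw [abs_of_pos (by positivity : 0 < |y|⁻¹ * ((j : ℝ) + 1)), mul_inv, inv_inv,
      ← div_eq_mul_inv]
    field_simp
  have estimate := bound |y|⁻¹ (inv_pos.2 hy)
  rw [riemann, integral_omegaFun_inv_div, show g 0 = 0 by simp [g], mul_zero, sub_zero,
    mul_div_cancel_left₀ _ two_ne_zero, inv_pow, ← div_eq_mul_inv, le_div_iff₀ (by positivity),
    abs_sub_comm] at estimate
  rwa [hKernel, mul_comm]

theorem omegaFun_abs_div_eq_zero {y : ℝ} {J j : ℕ} (hJ : 2 * |y| ≤ J) (hj : j ∉ Finset.range J) :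
    omegaFun (|y| / ((j : ℝ) + 1)) / ((j : ℝ) + 1) = 0 := by
  have hJj : (J : ℝ) ≤ j := mod_cast not_lt.1 (mt Finset.mem_range.2 hj)
  rw [omegaFun_eq_zero_of_le ((div_le_iff₀ (by positivity)).2 (by linarith)), zero_div]

theorem omegaRecipSum_eq_sum {y : ℝ} {J : ℕ} (hJ : 2 * |y| ≤ J) :
    omegaRecipSum y = ∑ j ∈ Finset.range J, omegaFun (|y| / ((j : ℝ) + 1)) / ((j : ℝ) + 1) :=
  tsum_eq_sum fun _ hj => omegaFun_abs_div_eq_zero hJ hj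

theorem continuous_omegaRecipSum : Continuous omegaRecipSum := by
  have := contDiff_omegaFun.continuous
  refine continuous_iff_continuousAt.2 fun y => ?_
  obtain ⟨J, hJ⟩ := exists_nat_ge (2 * (|y| + 1))
  have partialSum : Continuous fun z : ℝ =>
    ∑ j ∈ Finset.range J, omegaFun (|z| / ((j : ℝ) + 1)) / ((j : ℝ) + 1) := by fun_prop
  refine partialSum.continuousAt.congr_of_eventuallyEq ?_
  filter_upwards [continuous_abs.continuousAt.eventually_lt continuousAt_const
    (lt_add_one |y|)] with z hz
  exact omegaRecipSum_eq_sum (by linarith)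

theorem hasRapidDecay_hKernel : HasRapidDecay hKernel :=
  .of_two_le (continuous_const.sub continuous_omegaRecipSum) fun _ => exists_pow_mul_abs_hKernel_le

theorem hKernel_neg (y : ℝ) : hKernel (-y) = hKernel y := by
  simp only [hKernel, omegaRecipSum, abs_neg]

theorem hFun_eq_add_hKernel {x : ℝ} (hx : 0 < x) (y : ℝ) :
    hFun x y = (omegaSum x - omegaLogMass) / x + x⁻¹ * hKernel (y / x) := by
  have summable_direct :
      Summable fun j : ℕ => omegaFun (x * ((j : ℝ) + 1)) / ((j : ℝ) + 1) := by
    obtain ⟨J, hJ⟩ := exists_nat_ge (1 / x)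
    refine summable_of_ne_finset_zero (s := Finset.range J) fun j hj => ?_
    have hJj : (J : ℝ) ≤ j := mod_cast not_lt.1 (mt Finset.mem_range.2 hj)
    rw [omegaFun_eq_zero_of_ge ((div_le_iff₀' hx).1 (by linarith)), zero_div]
  have summable_recip :
      Summable fun j : ℕ => omegaFun (|y / x| / ((j : ℝ) + 1)) / ((j : ℝ) + 1) := by
    obtain ⟨J, hJ⟩ := exists_nat_ge (2 * |y / x|)
    exact summable_of_ne_finset_zero fun _ => omegaFun_abs_div_eq_zero hJ
  have combine : hFun x y = x⁻¹ * (omegaSum x - omegaRecipSum (y / x)) := by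
    rw [omegaSum, omegaRecipSum, ← summable_direct.tsum_sub summable_recip, ← tsum_mul_left]
    refine tsum_congr fun j => ?_
    rw [abs_div, abs_of_pos hx, div_div]
    field_simp
  rw [combine, hKernel]
  ring

/-! ### The moments of `κ` -/

/-- The `n`-th moment of `ω` over `|u| s ≤ 1`. Writing the range of integration without dividing by
`u` makes the full moment its value at `u = 0`. -/
def truncatedMoment (n : ℕ) (u : ℝ) : ℝ := ∫ s in {s | |u| * s ≤ 1}, s ^ n * omegaFun s

theorem continuous_pow_mul_omegaFun (n : ℕ) : Continuous fun s : ℝ => s ^ n * omegaFun s :=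
  (continuous_id.pow n).mul contDiff_omegaFun.continuous

theorem integrable_pow_mul_omegaFun (n : ℕ) : Integrable fun s : ℝ => s ^ n * omegaFun s :=
  (continuous_pow_mul_omegaFun n).integrable_of_hasCompactSupport <|
    .intro (isCompact_Icc (a := (1 / 2 : ℝ)) (b := 1)) fun s hs => by
      rcases le_or_gt s (1 / 2) with h | h
      · rw [omegaFun_eq_zero_of_le h, mul_zero]
      · rw [omegaFun_eq_zero_of_ge (not_le.1 fun h1 => hs ⟨h.le, h1⟩).le, mul_zero]

theorem contDiff_primitive_pow_mul_omegaFun (n : ℕ) :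
    ContDiff ℝ (⊤ : ℕ∞) (primitive fun s => s ^ n * omegaFun s) := by
  have hderiv :=
    hasDerivAt_primitive (continuous_pow_mul_omegaFun n) (integrable_pow_mul_omegaFun n)
  refine contDiff_infty_iff_deriv.2 ⟨fun r => (hderiv r).differentiableAt, ?_⟩
  rw [funext fun r => (hderiv r).deriv]
  exact (contDiff_id.pow n).mul contDiff_omegaFun

theorem truncatedMoment_eq_primitive (n : ℕ) {u : ℝ} (hu : 0 < u) :
    truncatedMoment n u = primitive (fun s => s ^ n * omegaFun s) u⁻¹ := by
  have range : {s | |u| * s ≤ 1} = Iic u⁻¹ := by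
    ext s
    rw [mem_ofPred_eq, mem_Iic, abs_of_pos hu, ← le_div_iff₀' hu, one_div]
  rw [truncatedMoment, range, primitive]

theorem truncatedMoment_eq_integral (n : ℕ) {u : ℝ} (hu : |u| ≤ 1) :
    truncatedMoment n u = ∫ s, s ^ n * omegaFun s := by
  refine setIntegral_eq_integral_of_forall_compl_eq_zero fun s hs => ?_
  have hs : 1 < |u| * s := not_le.1 hs
  have hs1 : 1 ≤ s := by nlinarith [abs_nonneg u]
  rw [omegaFun_eq_zero_of_ge hs1, mul_zero]

theorem truncatedMoment_eq_zero (n : ℕ) {u : ℝ} (hu : 2 ≤ |u|) : truncatedMoment n u = 0 := by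
  refine setIntegral_eq_zero_of_forall_eq_zero fun s hs => ?_
  have hs : |u| * s ≤ 1 := hs
  have hs1 : s ≤ 1 / 2 := by
    by_contra! h
    nlinarith
  rw [omegaFun_eq_zero_of_le hs1, mul_zero]

theorem contDiff_truncatedMoment (n : ℕ) : ContDiff ℝ (⊤ : ℕ∞) (truncatedMoment n) := by
  have abs_invariant : truncatedMoment n = fun u => truncatedMoment n |u| := by
    ext u
    simp only [truncatedMoment, abs_abs]
  rw [abs_invariant]
  refine contDiff_comp_abs one_pos (fun u hu => ?_)
    (contDiff_const (c := ∫ s, s ^ n * omegaFun s))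
    fun u hu => truncatedMoment_eq_integral n (by rw [abs_abs]; exact hu.le)
  refine ((contDiff_primitive_pow_mul_omegaFun n).contDiffAt.comp u
    (contDiffAt_id.inv hu.ne')).congr_of_eventuallyEq ?_
  filter_upwards [Ioi_mem_nhds hu] with v hv using truncatedMoment_eq_primitive n hv

theorem primitive_pow_mul_omegaFun (n : ℕ) {r : ℝ} (hr : 0 ≤ r) :
    primitive (fun s => s ^ n * omegaFun s) r = ∫ s in (0 : ℝ)..r, s ^ n * omegaFun s := by
  rw [primitive, intervalIntegral.integral_of_le hr]
  refine setIntegral_eq_of_subset_of_forall_sdiff_eq_zero measurableSet_Iic Ioc_subset_Iic_self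
    fun s hs => ?_
  have hs0 : s ≤ 0 := not_lt.1 fun h => hs.2 ⟨h, hs.1⟩
  rw [omegaFun_eq_zero_of_le (by linarith), mul_zero]

theorem integral_pow_mul_omegaFun_div (n j : ℕ) {Y : ℝ} (hY : 0 < Y) :
    ∫ y in (0 : ℝ)..Y, y ^ n * (omegaFun (y / ((j : ℝ) + 1)) / ((j : ℝ) + 1)) =
      Y ^ n * ((Y⁻¹ * ((j : ℝ) + 1)) ^ n * truncatedMoment n (Y⁻¹ * ((j : ℝ) + 1))) := by
  have hj : (0 : ℝ) < (j : ℝ) + 1 := by positivity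
  have rescale (y : ℝ) : y ^ n * (omegaFun (y / ((j : ℝ) + 1)) / ((j : ℝ) + 1)) =
      ((j : ℝ) + 1) ^ n / ((j : ℝ) + 1) *
        ((y / ((j : ℝ) + 1)) ^ n * omegaFun (y / ((j : ℝ) + 1))) := by
    rw [div_pow]; field_simp
  simp only [rescale]
  rw [intervalIntegral.integral_const_mul,
    intervalIntegral.integral_comp_div (fun s => s ^ n * omegaFun s) hj.ne', zero_div,
    ← primitive_pow_mul_omegaFun n (by positivity), truncatedMoment_eq_primitive n (by positivity),
    mul_inv, inv_inv, ← div_eq_mul_inv, smul_eq_mul, mul_pow, inv_pow]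
  field_simp

theorem integral_pow_mul_hKernel (n : ℕ) {Y : ℝ} (hY : 0 < Y) :
    ∫ y in (0 : ℝ)..Y, y ^ n * hKernel y = omegaLogMass * Y ^ (n + 1) / (n + 1) -
      Y ^ n * ∑' j : ℕ, (Y⁻¹ * ((j : ℝ) + 1)) ^ n * truncatedMoment n (Y⁻¹ * ((j : ℝ) + 1)) := by
  obtain ⟨J, hJ⟩ := exists_nat_ge (2 * Y)
  have := contDiff_omegaFun.continuous
  have expand : ∫ y in (0 : ℝ)..Y, y ^ n * hKernel y =
      ∫ y in (0 : ℝ)..Y, (y ^ n * omegaLogMass -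
        ∑ j ∈ Finset.range J, y ^ n * (omegaFun (y / ((j : ℝ) + 1)) / ((j : ℝ) + 1))) := by
    refine intervalIntegral.integral_congr fun y hy => ?_
    rw [uIcc_of_le hY.le] at hy
    have hyJ : 2 * |y| ≤ J := by rw [abs_of_nonneg hy.1]; linarith [hy.2]
    simp only [hKernel, omegaRecipSum_eq_sum hyJ, mul_sub, Finset.mul_sum, abs_of_nonneg hy.1]
  have truncate : ∑' j : ℕ, (Y⁻¹ * ((j : ℝ) + 1)) ^ n * truncatedMoment n (Y⁻¹ * ((j : ℝ) + 1)) =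
      ∑ j ∈ Finset.range J,
        (Y⁻¹ * ((j : ℝ) + 1)) ^ n * truncatedMoment n (Y⁻¹ * ((j : ℝ) + 1)) := by
    refine tsum_eq_sum fun j hj => ?_
    have hJj : (J : ℝ) ≤ j := mod_cast not_lt.1 (mt Finset.mem_range.2 hj)
    rw [truncatedMoment_eq_zero, mul_zero]
    rw [abs_of_pos (by positivity), ← div_eq_inv_mul, le_div_iff₀ hY]
    linarith
  rw [expand, truncate, intervalIntegral.integral_sub, intervalIntegral.integral_finsetSum,
    intervalIntegral.integral_mul_const, integral_pow, Finset.mul_sum]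
  · simp only [integral_pow_mul_omegaFun_div n _ hY]
    rw [zero_pow n.succ_ne_zero]
    ring
  all_goals intros; exact Continuous.intervalIntegrable (by fun_prop) _ _

theorem eq_of_tendsto_of_tendsto_sub_pow {f : ℝ → ℝ} {l a b : ℝ} {k : ℕ} (hk : k ≠ 0)
    (hf : Tendsto f atTop (𝓝 l))
    (hsub : Tendsto (fun Y => f Y - (a * Y ^ k + b)) atTop (𝓝 0)) : l = b := by
  have monomial : Tendsto (fun Y : ℝ => a * Y ^ k) atTop (𝓝 (l - b)) := by
    simpa using ((hf.sub hsub).sub_const b).congr fun Y => by ring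
  have ha : a = 0 := by
    have quotient := monomial.mul (tendsto_inv_atTop_zero.comp (tendsto_pow_atTop hk))
    rw [mul_zero] at quotient
    refine tendsto_nhds_unique (tendsto_const_nhds.congr' ?_) quotient
    filter_upwards [eventually_gt_atTop 0] with Y hY
    simp [hY.ne']
  simp only [ha, zero_mul] at monomial
  exact sub_eq_zero.1 (tendsto_nhds_unique monomial tendsto_const_nhds)

theorem exists_abs_integral_pow_mul_hKernel_sub_le {n : ℕ} (hn : Even n) :
    ∃ C a : ℝ, ∀ Y : ℝ, 0 < Y → |(∫ y in (0 : ℝ)..Y, y ^ n * hKernel y) -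
      (a * Y ^ (n + 1) + 0 ^ n * truncatedMoment n 0 / 2)| ≤ C * Y⁻¹ := by
  let g : ℝ → ℝ := fun u => u ^ n * truncatedMoment n u
  have hc : HasCompactSupport g := hasCompactSupport_of_forall_lt_abs (R := 2)
    fun u hu => by simp only [g, truncatedMoment_eq_zero n hu.le, mul_zero]
  have he : g.Even := fun u => by simp only [g, truncatedMoment, hn.neg_pow, abs_neg]
  obtain ⟨C, -, bound⟩ := exists_abs_mul_tsum_succ_sub_le_of_even
    ((contDiff_id.pow n).mul (contDiff_truncatedMoment n)) hc he (N := n + 2) (by lia)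
  refine ⟨C, omegaLogMass / (n + 1) - (∫ u, g u) / 2, fun Y hY => ?_⟩
  have g_zero : Y ^ n * g 0 = g 0 := by
    rcases n.eq_zero_or_pos with rfl | hpos
    · simp
    · simp [g, zero_pow hpos.ne']
  have error := bound Y⁻¹ (inv_pos.2 hY)
  rw [integral_pow_mul_hKernel n hY]
  set S := ∑' j : ℕ, g (Y⁻¹ * ((j : ℝ) + 1))
  calc |omegaLogMass * Y ^ (n + 1) / (n + 1) - Y ^ n * S -
        ((omegaLogMass / (n + 1) - (∫ u, g u) / 2) * Y ^ (n + 1) + g 0 / 2)|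
      = |-(Y ^ (n + 1) * (Y⁻¹ * S - ((∫ u, g u) - Y⁻¹ * g 0) / 2))| := by
        congr 1
        nth_rw 1 [← g_zero]
        field
    _ ≤ Y ^ (n + 1) * (C * Y⁻¹ ^ (n + 2)) := by
        rw [abs_neg, abs_mul, abs_of_pos (by positivity)]
        gcongr
        exact error
    _ = C * Y⁻¹ := by rw [inv_pow]; field

theorem integral_Ioi_pow_mul_hKernel {n : ℕ} (hn : Even n) :
    ∫ y in Ioi (0 : ℝ), y ^ n * hKernel y = 0 ^ n * truncatedMoment n 0 / 2 := by
  obtain ⟨C, a, bound⟩ := exists_abs_integral_pow_mul_hKernel_sub_le hn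
  refine eq_of_tendsto_of_tendsto_sub_pow (a := a) n.succ_ne_zero
    (intervalIntegral_tendsto_integral_Ioi 0
      (hasRapidDecay_hKernel.integrable_pow_mul n).integrableOn tendsto_id)
    (squeeze_zero_norm' (a := fun Y => C * Y⁻¹) ?_ ?_)
  · filter_upwards [eventually_gt_atTop 0] with Y hY using bound Y hY
  · simpa using tendsto_inv_atTop_zero.const_mul C

theorem integral_pow_mul_hKernel_of_even {n : ℕ} (hn : Even n) :
    ∫ y, y ^ n * hKernel y = 0 ^ n * truncatedMoment n 0 := by
  have fold (y : ℝ) : y ^ n * hKernel y = |y| ^ n * hKernel |y| := by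
    rcases abs_choice y with h | h <;> simp only [h, hn.neg_pow, hKernel_neg]
  rw [integral_congr_ae (.of_forall fold), integral_comp_abs (f := fun t => t ^ n * hKernel t),
    integral_Ioi_pow_mul_hKernel hn, mul_div_cancel₀ _ two_ne_zero]

theorem integral_hKernel : ∫ y, hKernel y = 1 := by
  have zeroth := integral_pow_mul_hKernel_of_even Even.zero
  rw [truncatedMoment_eq_integral 0 (by simp)] at zeroth
  simpa [integral_omegaFun] using zeroth

theorem integral_pow_mul_hKernel_eq_zero {n : ℕ} (hn : n ≠ 0) : ∫ y, y ^ n * hKernel y = 0 := by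
  rcases n.even_or_odd with h | h
  · rw [integral_pow_mul_hKernel_of_even h, zero_pow hn, zero_mul]
  · have reflect := integral_neg_eq_self (fun y => y ^ n * hKernel y) volume
    simp only [hKernel_neg, h.neg_pow, neg_mul, integral_neg] at reflect
    linarith

/-! ### Kernels with vanishing moments derived from `κ` -/

/-- The difference between `κ` at unit scale and at scale `1/2`; all of its moments vanish. -/
def dyadicKernel (y : ℝ) : ℝ := hKernel y - 2 * hKernel (2 * y)

theorem hasRapidDecay_dyadicKernel : HasRapidDecay dyadicKernel :=
  hasRapidDecay_hKernel.sub (hasRapidDecay_hKernel.mul_comp_mul two_ne_zero)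

theorem integral_pow_mul_dyadicKernel (n : ℕ) : ∫ y, y ^ n * dyadicKernel y = 0 := by
  have dilated : ∫ y, y ^ n * (2 * hKernel (2 * y)) = (2 ^ n)⁻¹ * ∫ y, y ^ n * hKernel y := by
    have rescale (y : ℝ) : y ^ n * (2 * hKernel (2 * y)) =
        ((2 ^ n)⁻¹ * 2) * ((2 * y) ^ n * hKernel (2 * y)) := by rw [mul_pow]; field_simp
    rw [integral_congr_ae (.of_forall rescale), integral_const_mul,
      Measure.integral_comp_mul_left (fun y : ℝ => y ^ n * hKernel y), abs_of_pos (by norm_num),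
      smul_eq_mul]
    ring
  simp only [dyadicKernel, mul_sub]
  rw [integral_sub (hasRapidDecay_hKernel.integrable_pow_mul n)
    ((hasRapidDecay_hKernel.mul_comp_mul two_ne_zero).integrable_pow_mul n), dilated]
  rcases eq_or_ne n 0 with rfl | hn
  · simp
  · simp [integral_pow_mul_hKernel_eq_zero hn]

/-- The tent function `max (0, 1 - |y|)`, the average of normalized indicators of intervals around
the origin. -/
def tent (y : ℝ) : ℝ := max 0 (1 - |y|)

theorem hasRapidDecay_tent : HasRapidDecay tent where
  continuous := by unfold tent; fun_prop
  decay n := by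
    refine ⟨1, fun y => ?_⟩
    rcases le_total |y| 1 with h | h
    · have tent_le : |tent y| ≤ 1 := by
        rw [tent, max_eq_right (by linarith), abs_of_nonneg (by linarith)]
        linarith [abs_nonneg y]
      exact mul_le_one₀ (pow_le_one₀ (abs_nonneg y) h) (abs_nonneg _) tent_le
    · simp [tent, max_eq_left (by linarith : 1 - |y| ≤ 0)]

theorem integral_tent : ∫ y, tent y = 1 := by
  have truncate : ∫ t in Ioi (0 : ℝ), max 0 (1 - t) = ∫ t in (0 : ℝ)..1, (1 - t) := by
    rw [intervalIntegral.integral_of_le zero_le_one, ← setIntegral_congr_fun measurableSet_Ioc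
      fun t ht => max_eq_right (sub_nonneg.2 ht.2)]
    refine setIntegral_eq_of_subset_of_forall_sdiff_eq_zero measurableSet_Ioi Ioc_subset_Ioi_self
      fun t ht => max_eq_left ?_
    linarith [not_le.1 fun h => ht.2 ⟨ht.1, h⟩]
  simp only [tent]
  rw [integral_comp_abs (f := fun t => max 0 (1 - t)), truncate,
    intervalIntegral.integral_sub (by simp) (by simp)]
  norm_num

/-! ### Averages over neighbourhoods of a level set -/

section LevelAverage

variable {X : Type*} [MeasureSpace X]

/-- The mean of `w` over the shell `|F| ≤ ε`, relative to its width `2ε`; its limit as `ε → 0` is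
the singular integral of `w` over `{F = 0}`. -/
def shellAverage (F w : X → ℝ) (ε : ℝ) : ℝ := (1 / (2 * ε)) * ∫ z in {z | |F z| ≤ ε}, w z

/-- The integral of `w` against the kernel `g`, rescaled to width `x` and pulled back by `F`. -/
def levelAverage (g : ℝ → ℝ) (F w : X → ℝ) (x : ℝ) : ℝ := ∫ z, w z * (x⁻¹ * g (F z / x))

variable {F w : X → ℝ} {g k : ℝ → ℝ} {x : ℝ}

theorem HasRapidDecay.integrable_mul_comp_div (hg : HasRapidDecay g) (hF : Measurable F)
    (hw : Integrable w) : Integrable fun z => w z * (x⁻¹ * g (F z / x)) := by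
  obtain ⟨C, hC⟩ := hg.decay 0
  refine hw.mul_bdd (c := |x⁻¹| * C)
    ((hg.continuous.measurable.comp (hF.div_const x)).const_mul _).aestronglyMeasurable
    (.of_forall fun z => ?_)
  rw [norm_mul]
  exact mul_le_mul_of_nonneg_left (by simpa using hC (F z / x)) (abs_nonneg _)

theorem levelAverage_sub (hg : HasRapidDecay g) (hk : HasRapidDecay k) (hF : Measurable F)
    (hw : Integrable w) : levelAverage (fun y => g y - k y) F w x =
      levelAverage g F w x - levelAverage k F w x := by
  simp only [levelAverage, mul_sub]
  exact integral_sub (hg.integrable_mul_comp_div hF hw) (hk.integrable_mul_comp_div hF hw)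

theorem levelAverage_half : levelAverage g F w (x / 2) =
    levelAverage (fun y => 2 * g (2 * y)) F w x := by
  unfold levelAverage
  congr 1 with z
  rw [inv_div, div_div_eq_mul_div, mul_comm (F z) 2, mul_div_assoc]
  ring

theorem tent_eq_setIntegral (y : ℝ) :
    tent y = ∫ s in Ioc (0 : ℝ) 1, indicator {s | |y| ≤ s} 1 s := by
  have hinter : Ici |y| ∩ Icc 0 1 = Icc |y| 1 := by
    ext s
    exact ⟨fun h => ⟨h.1, h.2.2⟩, fun h => ⟨h.1, (abs_nonneg y).trans h.1, h.2⟩⟩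
  rw [← integral_Icc_eq_integral_Ioc]
  change tent y = ∫ s in Icc (0 : ℝ) 1, (Ici |y|).indicator 1 s
  rw [integral_indicator_one measurableSet_Ici, measureReal_restrict_apply measurableSet_Ici,
    hinter]
  simp [tent, Measure.real, ENNReal.toReal_ofReal', max_comm]

theorem integral_mul_indicator_shell (hF : Measurable F) {ε : ℝ} (hε : 0 < ε) {s : ℝ}
    (hs : 0 < s) :
    ∫ z, w z * (ε⁻¹ * indicator {s | |F z / ε| ≤ s} 1 s) = 2 * s * shellAverage F w (s * ε) := by
  have hshell : MeasurableSet {z | |F z| ≤ s * ε} := measurableSet_le hF.abs measurable_const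
  calc ∫ z, w z * (ε⁻¹ * indicator {s | |F z / ε| ≤ s} 1 s)
      = ∫ z, ε⁻¹ * indicator {z | |F z| ≤ s * ε} w z := by
        congr 1 with z
        have hiff : |F z / ε| ≤ s ↔ |F z| ≤ s * ε := by
          rw [abs_div, abs_of_pos hε, div_le_iff₀ hε]
        simp only [indicator, mem_ofPred_eq, hiff]
        split_ifs <;> simp [mul_comm]
    _ = 2 * s * shellAverage F w (s * ε) := by
        rw [integral_const_mul, integral_indicator hshell, shellAverage]
        field_simp

theorem integrable_mul_indicator_shell (hF : Measurable F) (hw : Integrable w) {ε : ℝ}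
    (hε : 0 < ε) :
    Integrable (fun p : X × ℝ => w p.1 * (ε⁻¹ * indicator {s | |F p.1 / ε| ≤ s} 1 p.2))
      (volume.prod (volume.restrict (Ioc (0 : ℝ) 1))) := by
  have hmeas : Measurable fun p : X × ℝ => indicator {s | |F p.1 / ε| ≤ s} (1 : ℝ → ℝ) p.2 :=
    Measurable.ite (measurableSet_le (by fun_prop) measurable_snd) measurable_one measurable_zero
  refine (hw.comp_fst _).mul_bdd (c := ε⁻¹) (hmeas.const_mul _).aestronglyMeasurable
    (.of_forall fun p => ?_)
  rw [norm_mul, Real.norm_of_nonneg (inv_pos.2 hε).le]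
  refine mul_le_of_le_one_right (inv_pos.2 hε).le ?_
  exact (norm_indicator_le_norm_self _ _).trans_eq (by simp)

variable [SFinite (volume : Measure X)]

theorem levelAverage_tent (hF : Measurable F) (hw : Integrable w) {ε : ℝ} (hε : 0 < ε) :
    levelAverage tent F w ε = ∫ s in Ioc (0 : ℝ) 1, 2 * s * shellAverage F w (s * ε) := by
  calc levelAverage tent F w ε
      = ∫ z, ∫ s in Ioc (0 : ℝ) 1, w z * (ε⁻¹ * indicator {s | |F z / ε| ≤ s} 1 s) := by
        simp only [levelAverage, tent_eq_setIntegral, integral_const_mul]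
    _ = ∫ s in Ioc (0 : ℝ) 1, ∫ z, w z * (ε⁻¹ * indicator {s | |F z / ε| ≤ s} 1 s) :=
        integral_integral_swap (integrable_mul_indicator_shell hF hw hε)
    _ = _ := setIntegral_congr_fun measurableSet_Ioc fun s hs =>
        integral_mul_indicator_shell hF hε hs.1

theorem aestronglyMeasurable_shellAverage (hF : Measurable F) (hw : Integrable w) {ε : ℝ}
    (hε : 0 < ε) : AEStronglyMeasurable (fun s => 2 * s * shellAverage F w (s * ε))
      (volume.restrict (Ioc (0 : ℝ) 1)) :=
  (integrable_mul_indicator_shell hF hw hε).integral_prod_right.aestronglyMeasurable.congr <| by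
    filter_upwards [ae_restrict_mem measurableSet_Ioc] with s hs
      using integral_mul_indicator_shell hF hε hs.1

theorem tendsto_levelAverage_tent (hF : Measurable F) (hw : Integrable w) {σ : ℝ}
    (hσ : Tendsto (shellAverage F w) (𝓝[>] 0) (𝓝 σ)) :
    Tendsto (levelAverage tent F w) (𝓝[>] 0) (𝓝 σ) := by
  have hlim : ∫ s in Ioc (0 : ℝ) 1, 2 * s * σ = σ := by
    rw [← intervalIntegral.integral_of_le zero_le_one, intervalIntegral.integral_mul_const,
      intervalIntegral.integral_const_mul, integral_id]
    norm_num
  obtain ⟨r, hr, hbound⟩ : ∃ r > 0, ∀ ε ∈ Ioo 0 r, |shellAverage F w ε| ≤ |σ| + 1 :=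
    mem_nhdsGT_iff_exists_Ioo_subset.1
      (hσ.abs.eventually (eventually_le_nhds (lt_add_one |σ|)))
  rw [← hlim]
  refine (tendsto_integral_filter_of_dominated_convergence (fun _ => 2 * (|σ| + 1)) ?_ ?_
    (integrable_const _) ?_).congr' ?_ (f₁ := fun ε => ∫ s in Ioc (0 : ℝ) 1,
      2 * s * shellAverage F w (s * ε))
  · filter_upwards [self_mem_nhdsWithin] with ε hε
      using aestronglyMeasurable_shellAverage hF hw hε
  · filter_upwards [Ioo_mem_nhdsGT hr] with ε hε
    filter_upwards [ae_restrict_mem measurableSet_Ioc] with s hs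
    have hsε : s * ε ∈ Ioo 0 r :=
      ⟨mul_pos hs.1 hε.1, (mul_le_of_le_one_left hε.1.le hs.2).trans_lt hε.2⟩
    rw [norm_mul, Real.norm_of_nonneg (by linarith [hs.1])]
    exact mul_le_mul (by linarith [hs.2]) (hbound _ hsε) (norm_nonneg _) zero_le_two
  · filter_upwards [ae_restrict_mem measurableSet_Ioc] with s hs
    have hscale : Tendsto (fun ε => s * ε) (𝓝[>] 0) (𝓝[>] 0) :=
      tendsto_iff_comap.2 (comap_mulLeft_nhdsGT_zero hs.1).ge
    exact (hσ.comp hscale).const_mul (2 * s)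
  · filter_upwards [self_mem_nhdsWithin] with ε hε using (levelAverage_tent hF hw hε).symm

end LevelAverage

theorem abs_sub_le_of_abs_sub_half_le {P : ℝ → ℝ} {σ K : ℝ} {M : ℕ} (hM : M ≠ 0)
    (hP : Tendsto P (𝓝[>] 0) (𝓝 σ)) (hhalf : ∀ x > 0, |P x - P (x / 2)| ≤ K * x ^ M) {x : ℝ}
    (hx : 0 < x) : |P x - σ| ≤ 2 * K * x ^ M := by
  have hK : 0 ≤ K * x ^ M := (abs_nonneg _).trans (hhalf x hx)
  have hseq : Tendsto (fun n : ℕ => x * (1 / 2) ^ n) atTop (𝓝[>] 0) := by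
    refine tendsto_nhdsWithin_iff.2 ⟨?_, .of_forall fun n => mem_Ioi.2 (by positivity)⟩
    simpa using (tendsto_pow_atTop_nhds_zero_of_lt_one (r := (1 / 2 : ℝ)) (by norm_num)
      (by norm_num)).const_mul x
  have hstep (n : ℕ) :
      dist (P (x * (1 / 2) ^ n)) (P (x * (1 / 2) ^ (n + 1))) ≤ 2 * (K * x ^ M) / 2 / 2 ^ n := by
    have hhalf_eq : x * (1 / 2) ^ (n + 1) = x * (1 / 2) ^ n / 2 := by ring
    have hpow : ((1 / 2 : ℝ) ^ n) ^ M ≤ (1 / 2) ^ n :=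
      pow_le_of_le_one (by positivity) (pow_le_one₀ (by norm_num) (by norm_num)) hM
    calc dist (P (x * (1 / 2) ^ n)) (P (x * (1 / 2) ^ (n + 1)))
        ≤ K * (x * (1 / 2) ^ n) ^ M := hhalf_eq ▸ hhalf _ (by positivity)
      _ = K * x ^ M * ((1 / 2) ^ n) ^ M := by rw [mul_pow, mul_assoc]
      _ ≤ K * x ^ M * (1 / 2) ^ n := mul_le_mul_of_nonneg_left hpow hK
      _ = 2 * (K * x ^ M) / 2 / 2 ^ n := by rw [one_div, inv_pow]; ring
  simpa [Real.dist_eq, mul_assoc] using dist_le_of_le_geometric_two_of_tendsto₀ hstep (hP.comp hseq)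

/-! ### Symbols singular at the origin -/

variable {d : ℕ}

/-- The squared Euclidean norm; the norm of `Fin d → ℝ` is the sup norm, which is not smooth. -/
def euclidSq (z : Fin d → ℝ) : ℝ := ∑ i, z i ^ 2

/-- The size `√(1 + |z|⁻²)` of one derivative (or one factor `|z|⁻¹`) near the origin, bounded
below by `1` far from it. -/
def singularSize (z : Fin d → ℝ) : ℝ := √(1 + (euclidSq z)⁻¹)

/-- The `j`-th partial derivative. -/
def partialDeriv (j : Fin d) (f : (Fin d → ℝ) → ℝ) (z : Fin d → ℝ) : ℝ :=
  fderiv ℝ f z (Pi.single j 1)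

/-- `IsSymbol W n p K v` says that off the origin `v` has partial derivatives up to order `n`, and
that those of order `k` are continuous and at most `K * W * singularSize ^ (p + k)` in size. -/
def IsSymbol (W : (Fin d → ℝ) → ℝ) : ℕ → ℕ → ℝ → ((Fin d → ℝ) → ℝ) → Prop
  | 0, p, K, v => (∀ z ≠ 0, |v z| ≤ K * W z * singularSize z ^ p) ∧ ContinuousOn v {0}ᶜ
  | n + 1, p, K, v => (∀ z ≠ 0, |v z| ≤ K * W z * singularSize z ^ p) ∧
      (∀ z ≠ 0, DifferentiableAt ℝ v z) ∧ ∀ j, IsSymbol W n (p + 1) K (partialDeriv j v)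

theorem euclidSq_nonneg (z : Fin d → ℝ) : 0 ≤ euclidSq z := Finset.sum_nonneg fun _ _ => sq_nonneg _

theorem euclidSq_pos {z : Fin d → ℝ} (hz : z ≠ 0) : 0 < euclidSq z := by
  obtain ⟨i, hi⟩ := Function.ne_iff.1 hz
  exact Finset.sum_pos' (fun _ _ => sq_nonneg _) ⟨i, Finset.mem_univ i, sq_pos_of_ne_zero hi⟩

theorem sq_apply_le_euclidSq (z : Fin d → ℝ) (i : Fin d) : z i ^ 2 ≤ euclidSq z :=
  Finset.single_le_sum (f := fun i => z i ^ 2) (fun _ _ => sq_nonneg _) (Finset.mem_univ i)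

theorem one_le_singularSize (z : Fin d → ℝ) : 1 ≤ singularSize z := by
  rw [singularSize, Real.one_le_sqrt]
  exact le_add_of_nonneg_right (inv_nonneg.2 (euclidSq_nonneg z))

theorem singularSize_nonneg (z : Fin d → ℝ) : 0 ≤ singularSize z := Real.sqrt_nonneg _

theorem singularSize_sq (z : Fin d → ℝ) : singularSize z ^ 2 = 1 + (euclidSq z)⁻¹ :=
  Real.sq_sqrt (add_nonneg zero_le_one (inv_nonneg.2 (euclidSq_nonneg z)))

section PartialDeriv

variable {f g : (Fin d → ℝ) → ℝ} {z : Fin d → ℝ}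

theorem partialDeriv_congr (h : ∀ y ≠ 0, f y = g y) (j : Fin d) (hz : z ≠ 0) :
    partialDeriv j f z = partialDeriv j g z := by
  have : f =ᶠ[𝓝 z] g := by
    filter_upwards [isOpen_compl_singleton.mem_nhds hz] with y hy using h y hy
  rw [partialDeriv, this.fderiv_eq, partialDeriv]

theorem partialDeriv_add (hf : DifferentiableAt ℝ f z) (hg : DifferentiableAt ℝ g z) (j : Fin d) :
    partialDeriv j (fun y => f y + g y) z = partialDeriv j f z + partialDeriv j g z := by
  rw [partialDeriv, fderiv_fun_add hf hg]; rfl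

theorem partialDeriv_const_mul (hf : DifferentiableAt ℝ f z) (c : ℝ) (j : Fin d) :
    partialDeriv j (fun y => c * f y) z = c * partialDeriv j f z := by
  rw [partialDeriv, fderiv_const_mul hf]; rfl

theorem partialDeriv_mul (hf : DifferentiableAt ℝ f z) (hg : DifferentiableAt ℝ g z) (j : Fin d) :
    partialDeriv j (fun y => f y * g y) z =
      partialDeriv j f z * g z + f z * partialDeriv j g z := by
  rw [partialDeriv, fderiv_fun_mul hf hg, partialDeriv, partialDeriv]
  simp only [add_apply, smul_apply, smul_eq_mul]
  ring

theorem partialDeriv_apply (i j : Fin d) (z : Fin d → ℝ) :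
    partialDeriv j (fun y => y i) z = if i = j then 1 else 0 := by
  have := (ContinuousLinearMap.proj (R := ℝ) (φ := fun _ : Fin d => ℝ) i).fderiv (x := z)
  change fderiv ℝ (fun y : Fin d → ℝ => y i) z = _ at this
  rw [partialDeriv, this]
  simp [Pi.single_apply]

theorem differentiable_euclidSq : Differentiable ℝ (euclidSq (d := d)) := by
  unfold euclidSq
  fun_prop

theorem partialDeriv_comp {φ : ℝ → ℝ} {φ' : ℝ} (hφ : HasDerivAt φ φ' (f z))
    (hf : DifferentiableAt ℝ f z) (j : Fin d) :
    partialDeriv j (fun y => φ (f y)) z = φ' * partialDeriv j f z := by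
  have hc : HasFDerivAt (fun y => φ (f y)) (φ' • fderiv ℝ f z) z :=
    hφ.comp_hasFDerivAt z hf.hasFDerivAt
  rw [partialDeriv, hc.fderiv]
  rfl

theorem partialDeriv_sum {ι : Type*} {s : Finset ι} {f : ι → (Fin d → ℝ) → ℝ}
    (hf : ∀ i ∈ s, DifferentiableAt ℝ (f i) z) (j : Fin d) :
    partialDeriv j (fun y => ∑ i ∈ s, f i y) z = ∑ i ∈ s, partialDeriv j (f i) z := by
  rw [partialDeriv, fderiv_fun_sum hf, sum_apply]
  rfl

theorem partialDeriv_euclidSq (j : Fin d) (z : Fin d → ℝ) :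
    partialDeriv j euclidSq z = 2 * z j := by
  unfold euclidSq
  rw [partialDeriv_sum (fun _ _ => by fun_prop)]
  simp [partialDeriv_comp (hasDerivAt_pow 2 _) (differentiableAt_apply _ z), partialDeriv_apply]

theorem partialDeriv_inv_euclidSq (j : Fin d) (hz : z ≠ 0) :
    partialDeriv j (fun y => (euclidSq y)⁻¹) z =
      -2 * ((euclidSq z)⁻¹ * (z j * (euclidSq z)⁻¹)) := by
  have hq := (euclidSq_pos hz).ne'
  rw [partialDeriv_comp (hasDerivAt_inv hq) (differentiable_euclidSq z), partialDeriv_euclidSq]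
  field_simp

theorem differentiableAt_inv_euclidSq (hz : z ≠ 0) :
    DifferentiableAt ℝ (fun y => (euclidSq y)⁻¹) z :=
  (differentiable_euclidSq z).inv (euclidSq_pos hz).ne'

end PartialDeriv

namespace IsSymbol

variable {W : (Fin d → ℝ) → ℝ} {n p r : ℕ} {K L : ℝ} {u v : (Fin d → ℝ) → ℝ}

theorem abs_le (h : IsSymbol W n p K v) {z : Fin d → ℝ} (hz : z ≠ 0) :
    |v z| ≤ K * W z * singularSize z ^ p := by
  cases n with
  | zero => exact h.1 z hz
  | succ n => exact h.1 z hz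

theorem continuousOn (h : IsSymbol W n p K v) : ContinuousOn v {0}ᶜ := by
  cases n with
  | zero => exact h.2
  | succ n => exact fun z hz => (h.2.1 z hz).continuousAt.continuousWithinAt

theorem differentiableAt (h : IsSymbol W (n + 1) p K v) {z : Fin d → ℝ} (hz : z ≠ 0) :
    DifferentiableAt ℝ v z := h.2.1 z hz

theorem partialDeriv (h : IsSymbol W (n + 1) p K v) (j : Fin d) :
    IsSymbol W n (p + 1) K (partialDeriv j v) := h.2.2 j

theorem of_succ (h : IsSymbol W (n + 1) p K v) : IsSymbol W n p K v := by
  induction n generalizing p v with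
  | zero => exact ⟨h.1, h.continuousOn⟩
  | succ n ih => exact ⟨h.1, h.2.1, fun j => ih (h.2.2 j)⟩

theorem of_le {k : ℕ} (h : IsSymbol W n p K v) (hkn : k ≤ n) : IsSymbol W k p K v :=
  Nat.decreasingInduction (motive := fun i _ => IsSymbol W i p K v) (fun _ _ hi => hi.of_succ) h hkn

theorem mono (hW : ∀ z, 0 ≤ W z) (hKL : K ≤ L) (h : IsSymbol W n p K v) : IsSymbol W n p L v := by
  have bound {n p : ℕ} {v : (Fin d → ℝ) → ℝ} (h : IsSymbol W n p K v) :
      ∀ z ≠ 0, |v z| ≤ L * W z * singularSize z ^ p := fun z hz => by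
    have := hW z
    have := singularSize_nonneg z
    exact (h.abs_le hz).trans (by gcongr)
  induction n generalizing p v with
  | zero => exact ⟨bound h, h.2⟩
  | succ n ih => exact ⟨bound h, h.2.1, fun j => ih (h.2.2 j)⟩

theorem congr (h : IsSymbol W n p K v) (huv : ∀ z ≠ 0, v z = u z) : IsSymbol W n p K u := by
  induction n generalizing p u v with
  | zero =>
    exact ⟨fun z hz => huv z hz ▸ h.1 z hz, h.2.congr fun z hz => (huv z hz).symm⟩
  | succ n ih =>
    refine ⟨fun z hz => huv z hz ▸ h.1 z hz, fun z hz => ?_,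
      fun j => ih (h.2.2 j) fun z hz => partialDeriv_congr huv j hz⟩
    refine (h.2.1 z hz).congr_of_eventuallyEq ?_
    filter_upwards [isOpen_compl_singleton.mem_nhds hz] with y hy using (huv y hy).symm

theorem add (hu : IsSymbol W n p K u) (hv : IsSymbol W n p L v) :
    IsSymbol W n p (K + L) fun z => u z + v z := by
  have bound {n p : ℕ} {u v : (Fin d → ℝ) → ℝ} (hu : IsSymbol W n p K u)
      (hv : IsSymbol W n p L v) : ∀ z ≠ 0, |u z + v z| ≤ (K + L) * W z * singularSize z ^ p :=
    fun z hz => by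
      rw [add_mul, add_mul]
      exact (abs_add_le _ _).trans (add_le_add (hu.abs_le hz) (hv.abs_le hz))
  induction n generalizing p u v with
  | zero => exact ⟨bound hu hv, hu.2.add hv.2⟩
  | succ n ih =>
    exact ⟨bound hu hv, fun z hz => (hu.2.1 z hz).add (hv.2.1 z hz), fun j =>
      (ih (hu.2.2 j) (hv.2.2 j)).congr fun z hz =>
        (partialDeriv_add (hu.2.1 z hz) (hv.2.1 z hz) j).symm⟩

theorem const_mul (h : IsSymbol W n p K v) (c : ℝ) :
    IsSymbol W n p (|c| * K) fun z => c * v z := by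
  have bound {n p : ℕ} {v : (Fin d → ℝ) → ℝ} (h : IsSymbol W n p K v) :
      ∀ z ≠ 0, |c * v z| ≤ |c| * K * W z * singularSize z ^ p := fun z hz => by
    rw [abs_mul, mul_assoc, mul_assoc, ← mul_assoc K]
    exact mul_le_mul_of_nonneg_left (h.abs_le hz) (abs_nonneg c)
  induction n generalizing p v with
  | zero => exact ⟨bound h, h.2.const_mul c⟩
  | succ n ih =>
    exact ⟨bound h, fun z hz => (h.2.1 z hz).const_mul c, fun j =>
      (ih (h.2.2 j)).congr fun z hz => (partialDeriv_const_mul (h.2.1 z hz) c j).symm⟩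

protected theorem zero (W : (Fin d → ℝ) → ℝ) (n p : ℕ) : IsSymbol W n p 0 fun _ => 0 := by
  induction n generalizing p with
  | zero => exact ⟨by simp, continuousOn_const⟩
  | succ n ih =>
    refine ⟨by simp, fun z _ => differentiableAt_const 0, fun j => (ih (p + 1)).congr fun z _ => ?_⟩
    simp [_root_.partialDeriv]

theorem sum {ι : Type*} (s : Finset ι) {K : ι → ℝ} {v : ι → (Fin d → ℝ) → ℝ}
    (h : ∀ i, IsSymbol W n p (K i) (v i)) :
    IsSymbol W n p (∑ i ∈ s, K i) fun z => ∑ i ∈ s, v i z := by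
  induction s using Finset.induction_on with
  | empty => simpa using IsSymbol.zero W n p
  | insert i s hi ih => simpa [Finset.sum_insert hi] using (h i).add ih

/-- `2 ^ n` counts the terms of the Leibniz rule. -/
theorem mul (hu : IsSymbol W n p K u) (hv : IsSymbol 1 n r L v) :
    IsSymbol W n (p + r) (2 ^ n * (K * L)) fun z => u z * v z := by
  have abs_mul_le {n p r : ℕ} {u v : (Fin d → ℝ) → ℝ} (hu : IsSymbol W n p K u)
      (hv : IsSymbol 1 n r L v) {z : Fin d → ℝ} (hz : z ≠ 0) :
      |u z * v z| ≤ K * L * W z * singularSize z ^ (p + r) := by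
    calc |u z * v z| = |u z| * |v z| := abs_mul _ _
      _ ≤ (K * W z * singularSize z ^ p) * (L * 1 * singularSize z ^ r) :=
        mul_le_mul (hu.abs_le hz) (hv.abs_le hz) (abs_nonneg _)
          ((abs_nonneg _).trans (hu.abs_le hz))
      _ = K * L * W z * singularSize z ^ (p + r) := by ring
  induction n generalizing p r u v with
  | zero => exact ⟨fun z hz => by simpa using abs_mul_le hu hv hz, hu.2.mul hv.2⟩
  | succ n ih =>
    refine ⟨fun z hz => ?_, fun z hz => (hu.2.1 z hz).mul (hv.2.1 z hz), fun j => ?_⟩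
    · have h := abs_mul_le hu hv hz
      rw [mul_assoc (2 ^ (n + 1)), mul_assoc (2 ^ (n + 1))]
      exact h.trans <| le_mul_of_one_le_left ((abs_nonneg _).trans h) (one_le_pow₀ one_le_two)
    · have hleft := ih (hu.2.2 j) hv.of_succ
      have hright := ih hu.of_succ (hv.2.2 j)
      rw [add_right_comm] at hleft
      rw [pow_succ, mul_right_comm, mul_two]
      exact (hleft.add hright).congr fun z hz =>
        (partialDeriv_mul (hu.2.1 z hz) (hv.2.1 z hz) j).symm

theorem of_contDiff (hW : ∀ z, 0 ≤ W z) (hK : 0 ≤ K) (hv : ContDiff ℝ n v)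
    (hvK : ∀ k ≤ n, ∀ z, ‖iteratedFDeriv ℝ k v z‖ ≤ K * W z) : IsSymbol W n p K v := by
  have bound {n p : ℕ} {v : (Fin d → ℝ) → ℝ}
      (h : ∀ k ≤ n, ∀ z, ‖iteratedFDeriv ℝ k v z‖ ≤ K * W z) :
      ∀ z ≠ 0, |v z| ≤ K * W z * singularSize z ^ p := fun z _ => by
    have h0 := h 0 n.zero_le z
    rw [norm_iteratedFDeriv_zero, Real.norm_eq_abs] at h0
    exact h0.trans
      (le_mul_of_one_le_right (mul_nonneg hK (hW z)) (one_le_pow₀ (one_le_singularSize z)))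
  induction n generalizing p v with
  | zero => exact ⟨bound hvK, hv.continuous.continuousOn⟩
  | succ n ih =>
    have hv' : ContDiff ℝ n (fderiv ℝ v) := hv.fderiv_right (by exact_mod_cast le_rfl)
    refine ⟨bound hvK, fun z _ => hv.differentiable (by simp) z,
      fun j => ih (hv'.clm_apply contDiff_const) fun k hk z => ?_⟩
    calc ‖iteratedFDeriv ℝ k (_root_.partialDeriv j v) z‖
        ≤ ‖(Pi.single j 1 : Fin d → ℝ)‖ * ‖iteratedFDeriv ℝ k (fderiv ℝ v) z‖ :=
          norm_iteratedFDeriv_clm_apply_const hv'.contDiffAt (by exact_mod_cast hk)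
      _ = ‖iteratedFDeriv ℝ (k + 1) v z‖ := by
          rw [Pi.norm_single, norm_one, one_mul, norm_iteratedFDeriv_fderiv]
      _ ≤ K * W z := hvK (k + 1) (by lia) z

end IsSymbol

theorem inv_euclidSq_le (z : Fin d → ℝ) : (euclidSq z)⁻¹ ≤ singularSize z ^ 2 := by
  linarith [singularSize_sq z]

theorem abs_apply_mul_inv_euclidSq_le (z : Fin d → ℝ) (k : Fin d) :
    |z k * (euclidSq z)⁻¹| ≤ singularSize z := by
  rcases (euclidSq_nonneg z).eq_or_lt with h | h
  · simpa [← h] using singularSize_nonneg z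
  refine abs_le_of_sq_le_sq ?_ (singularSize_nonneg z)
  calc (z k * (euclidSq z)⁻¹) ^ 2 = z k ^ 2 * (euclidSq z)⁻¹ * (euclidSq z)⁻¹ := by ring
    _ ≤ euclidSq z * (euclidSq z)⁻¹ * (euclidSq z)⁻¹ := by
        gcongr
        exact sq_apply_le_euclidSq z k
    _ = (euclidSq z)⁻¹ := by rw [mul_inv_cancel₀ h.ne', one_mul]
    _ ≤ singularSize z ^ 2 := inv_euclidSq_le z

theorem exists_isSymbol_inv_euclidSq (n : ℕ) : ∃ K : ℝ, 1 ≤ K ∧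
    IsSymbol 1 n 2 K (fun z : Fin d → ℝ => (euclidSq z)⁻¹) ∧
      ∀ k, IsSymbol 1 n 1 K fun z : Fin d → ℝ => z k * (euclidSq z)⁻¹ := by
  have hdiff (k : Fin d) {z : Fin d → ℝ} (hz : z ≠ 0) :
      DifferentiableAt ℝ (fun y => y k * (euclidSq y)⁻¹) z :=
    (differentiableAt_apply k z).mul (differentiableAt_inv_euclidSq hz)
  have hinv {K : ℝ} (hK : 1 ≤ K) (z : Fin d → ℝ) :
      |(euclidSq z)⁻¹| ≤ K * (1 : (Fin d → ℝ) → ℝ) z * singularSize z ^ 2 := by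
    rw [abs_of_nonneg (inv_nonneg.2 (euclidSq_nonneg z)), Pi.one_apply, mul_one]
    exact (inv_euclidSq_le z).trans (le_mul_of_one_le_left (sq_nonneg _) hK)
  have hcoord {K : ℝ} (hK : 1 ≤ K) (k : Fin d) (z : Fin d → ℝ) :
      |z k * (euclidSq z)⁻¹| ≤ K * (1 : (Fin d → ℝ) → ℝ) z * singularSize z ^ 1 := by
    rw [pow_one, Pi.one_apply, mul_one]
    exact (abs_apply_mul_inv_euclidSq_le z k).trans
      (le_mul_of_one_le_left (singularSize_nonneg z) hK)
  induction n with
  | zero =>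
    exact ⟨1, le_rfl, ⟨fun z _ => hinv le_rfl z, fun z hz =>
      (differentiableAt_inv_euclidSq hz).continuousAt.continuousWithinAt⟩,
      fun k => ⟨fun z _ => hcoord le_rfl k z, fun z hz =>
        (hdiff k hz).continuousAt.continuousWithinAt⟩⟩
  | succ n ih =>
    obtain ⟨K, hK, hQ, hz⟩ := ih
    have hK' : 1 ≤ K + |(-2 : ℝ)| * (2 ^ n * (K * K)) := by
      have : 0 ≤ |(-2 : ℝ)| * (2 ^ n * (K * K)) := by positivity
      linarith
    refine ⟨_, hK', ⟨fun z _ => hinv hK' z, fun z hz => differentiableAt_inv_euclidSq hz,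
      fun j => ?_⟩, fun k => ⟨fun z _ => hcoord hK' k z, fun z hz => hdiff k hz, fun j => ?_⟩⟩
    · exact ((hQ.mul (hz j)).const_mul (-2)).mono (fun _ => zero_le_one) (by linarith) |>.congr
        fun z hz => (partialDeriv_inv_euclidSq j hz).symm
    · have hdelta : |if k = j then (1 : ℝ) else 0| * K ≤ K := by
        split_ifs <;> simp [zero_le_one.trans hK]
      refine (((hQ.const_mul (if k = j then 1 else 0)).mono (fun _ => zero_le_one) hdelta).add
        (((hz k).mul (hz j)).const_mul (-2))).congr fun z hz => ?_
      rw [partialDeriv_mul (differentiableAt_apply k z) (differentiableAt_inv_euclidSq hz),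
        partialDeriv_apply, partialDeriv_inv_euclidSq j hz]
      ring

/-! ### Integration by parts across a point singularity -/

theorem ae_ne_zero_pi (hd : d ≠ 0) : ∀ᵐ z : Fin d → ℝ, z ≠ 0 := by
  have : Nonempty (Fin d) := Fin.pos_iff_nonempty.1 (Nat.pos_of_ne_zero hd)
  exact Measure.ae_ne volume 0

theorem measurable_of_continuousOn_compl_zero {f : (Fin d → ℝ) → ℝ} (hf : ContinuousOn f {0}ᶜ) :
    Measurable f :=
  measurable_of_continuousOn_compl_singleton 0 hf

theorem hasDerivAt_comp_insertNth {n : ℕ} {f : (Fin (n + 1) → ℝ) → ℝ} (j : Fin (n + 1)) (t : ℝ)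
    (y : Fin n → ℝ) (hf : DifferentiableAt ℝ f (j.insertNth t y)) :
    HasDerivAt (fun s => f (j.insertNth s y)) (partialDeriv j f (j.insertNth t y)) t := by
  have hline : HasDerivAt (fun s : ℝ => (j.insertNth s y : Fin (n + 1) → ℝ)) (Pi.single j 1) t := by
    refine hasDerivAt_pi.2 fun i => ?_
    rcases Fin.eq_self_or_eq_succAbove j i with rfl | ⟨k, rfl⟩
    · simpa using hasDerivAt_id' t
    · simpa using hasDerivAt_const t (y k)
  exact hf.hasFDerivAt.comp_hasDerivAt t hline

/-- Almost every line parallel to the `j`-th axis misses the origin. -/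
theorem integral_partialDeriv_eq_zero (hd : 2 ≤ d) {f : (Fin d → ℝ) → ℝ} (j : Fin d)
    (hdiff : ∀ z ≠ 0, DifferentiableAt ℝ f z) (hf : Integrable f)
    (hf' : Integrable (partialDeriv j f)) : ∫ z, partialDeriv j f z = 0 := by
  obtain ⟨n, rfl⟩ : ∃ n, d = n + 1 := ⟨d - 1, by lia⟩
  have hsymm := (volume_preserving_piFinSuccAbove (fun _ : Fin (n + 1) => ℝ) j).symm
  have hslice {g : (Fin (n + 1) → ℝ) → ℝ} (hg : Integrable g) :
      Integrable fun p : ℝ × (Fin n → ℝ) => g (j.insertNth p.1 p.2) :=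
    (hsymm.integrable_comp_emb (MeasurableEquiv.measurableEmbedding _)).2 hg
  calc ∫ z, partialDeriv j f z
      = ∫ p : ℝ × (Fin n → ℝ), partialDeriv j f (j.insertNth p.1 p.2) :=
        (hsymm.integral_comp (MeasurableEquiv.measurableEmbedding _) _).symm
    _ = ∫ y, ∫ t, partialDeriv j f (j.insertNth t y) := integral_prod_symm _ (hslice hf')
    _ = ∫ _ : Fin n → ℝ, 0 := integral_congr_ae ?_
    _ = 0 := integral_zero _ _
  filter_upwards [ae_ne_zero_pi (by lia), (hslice hf).prod_left_ae, (hslice hf').prod_left_ae]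
    with y hy hfy hfy'
  refine integral_eq_zero_of_hasDerivAt_of_integrable
    (fun t => hasDerivAt_comp_insertNth j t y (hdiff _ fun h0 => hy (funext fun k => ?_))) hfy' hfy
  simpa using congrFun h0 (j.succAbove k)

/-! ### The decay weight -/

/-- The smooth weight `(1 + |z|²) ^ (-(d + 1) / 2)`, comparable to `⟨z⟩ ^ (-(d + 1))`. -/
def decayWeight (z : Fin d → ℝ) : ℝ := (1 + euclidSq z) ^ (-((d : ℝ) + 1) / 2)

theorem decayWeight_nonneg (z : Fin d → ℝ) : 0 ≤ decayWeight z :=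
  Real.rpow_nonneg (add_nonneg zero_le_one (euclidSq_nonneg z)) _

theorem continuous_decayWeight : Continuous (decayWeight (d := d)) :=
  (continuous_const.add differentiable_euclidSq.continuous).rpow_const
    fun z => .inl (add_pos_of_pos_of_nonneg one_pos (euclidSq_nonneg z)).ne'

theorem measurable_singularSize : Measurable (singularSize (d := d)) :=
  (measurable_const.add differentiable_euclidSq.continuous.measurable.inv).sqrt

theorem norm_sq_le_euclidSq (z : Fin d → ℝ) : ‖z‖ ^ 2 ≤ euclidSq z := by
  have : ‖z‖ ≤ √(euclidSq z) := (pi_norm_le_iff_of_nonneg (Real.sqrt_nonneg _)).2 fun i =>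
    Real.abs_le_sqrt (sq_apply_le_euclidSq z i)
  exact (Real.le_sqrt (norm_nonneg z) (euclidSq_nonneg z)).1 this

theorem pow_mul_rpow_mul_sqrt_pow_le {p : ℕ} (hp : p < d) {y : ℝ} (hy : 0 < y) :
    y ^ (d - 1) * ((1 + y ^ 2) ^ (-((d : ℝ) + 1) / 2) * √(1 + (y ^ 2)⁻¹) ^ p) ≤
      (1 + y ^ 2)⁻¹ := by
  set s := √(1 + y ^ 2)
  have hs0 : 0 < s := Real.sqrt_pos.2 (by positivity)
  have hs2 : 1 + y ^ 2 = s ^ 2 := (Real.sq_sqrt (by positivity)).symm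
  have hys : y ≤ s := Real.le_sqrt_of_sq_le (by linarith)
  have hquot : √(1 + (y ^ 2)⁻¹) = s / y := by
    rw [show 1 + (y ^ 2)⁻¹ = (1 + y ^ 2) / y ^ 2 by field_simp; ring, Real.sqrt_div (by positivity),
      Real.sqrt_sq hy.le]
  have hpow : (1 + y ^ 2) ^ (-((d : ℝ) + 1) / 2) = (s ^ (d + 1))⁻¹ := by
    rw [hs2, ← Real.rpow_natCast s 2, ← Real.rpow_mul hs0.le, ← Real.rpow_natCast s (d + 1),
      ← Real.rpow_neg hs0.le]
    congr 1
    push_cast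
    ring
  obtain ⟨k, rfl⟩ := Nat.exists_eq_add_of_lt hp
  calc y ^ (p + k + 1 - 1) *
        ((1 + y ^ 2) ^ (-(((p + k + 1 : ℕ) : ℝ) + 1) / 2) * √(1 + (y ^ 2)⁻¹) ^ p)
      = (y / s) ^ k * (s ^ 2)⁻¹ := by
        rw [hquot, hpow, Nat.add_sub_cancel, div_pow, div_pow]
        field_simp
        ring
    _ ≤ (s ^ 2)⁻¹ :=
        mul_le_of_le_one_left (by positivity) (pow_le_one₀ (by positivity) ((div_le_one hs0).2 hys))
    _ = (1 + y ^ 2)⁻¹ := by rw [hs2]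

theorem integrable_decayWeight_mul_singularSize_pow {p : ℕ} (hp : p < d) :
    Integrable fun z : Fin d → ℝ => decayWeight z * singularSize z ^ p := by
  have : Nonempty (Fin d) := ⟨⟨0, by lia⟩⟩
  let radial (y : ℝ) : ℝ := (1 + y ^ 2) ^ (-((d : ℝ) + 1) / 2) * √(1 + (y ^ 2)⁻¹) ^ p
  have hradial : Integrable fun z : Fin d → ℝ => radial ‖z‖ := by
    rw [integrable_fun_norm_addHaar]
    refine Integrable.mono' integrable_inv_one_add_sq.integrableOn
      (Measurable.aestronglyMeasurable (by fun_prop)) ?_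
    filter_upwards [ae_restrict_mem measurableSet_Ioi] with y hy
    have hy : 0 < y := hy
    rw [Module.finrank_fin_fun, smul_eq_mul, Real.norm_of_nonneg (by positivity)]
    exact pow_mul_rpow_mul_sqrt_pow_le hp hy
  refine hradial.mono' (continuous_decayWeight.measurable.mul
    (measurable_singularSize.pow_const p)).aestronglyMeasurable ?_
  filter_upwards [ae_ne_zero_pi (by lia)] with z hz
  have : 0 < ‖z‖ := norm_pos_iff.2 hz
  have hle := norm_sq_le_euclidSq z
  have hdecay : decayWeight z ≤ (1 + ‖z‖ ^ 2) ^ (-((d : ℝ) + 1) / 2) :=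
    Real.rpow_le_rpow_of_nonpos (by positivity) (by linarith) (by linarith [d.cast_nonneg (α := ℝ)])
  have hsing : singularSize z ≤ √(1 + (‖z‖ ^ 2)⁻¹) := Real.sqrt_le_sqrt (by gcongr)
  have := decayWeight_nonneg z
  have := singularSize_nonneg z
  rw [Real.norm_of_nonneg (by positivity)]
  exact mul_le_mul hdecay (by gcongr) (by positivity) (by positivity)

namespace IsSymbol

variable {n p : ℕ} {K G : ℝ} {v : (Fin d → ℝ) → ℝ} {g : (Fin d → ℝ) → ℝ}

theorem ae_norm_mul_le (hv : IsSymbol decayWeight n p K v) (hd : d ≠ 0) (hG : ∀ z, |g z| ≤ G) :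
    ∀ᵐ z, ‖v z * g z‖ ≤ K * G * (decayWeight z * singularSize z ^ p) := by
  filter_upwards [ae_ne_zero_pi hd] with z hz
  calc ‖v z * g z‖ = |v z| * |g z| := abs_mul _ _
    _ ≤ (K * decayWeight z * singularSize z ^ p) * G :=
      mul_le_mul (hv.abs_le hz) (hG z) (abs_nonneg _) ((abs_nonneg _).trans (hv.abs_le hz))
    _ = K * G * (decayWeight z * singularSize z ^ p) := by ring

theorem integrable_mul (hv : IsSymbol decayWeight n p K v) (hp : p < d) (hg : Measurable g)
    (hG : ∀ z, |g z| ≤ G) : Integrable fun z => v z * g z :=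
  ((integrable_decayWeight_mul_singularSize_pow hp).const_mul _).mono'
    ((measurable_of_continuousOn_compl_zero hv.continuousOn).mul hg).aestronglyMeasurable
    (hv.ae_norm_mul_le (by lia) hG)

theorem integrable (hv : IsSymbol decayWeight n p K v) (hp : p < d) : Integrable v := by
  simpa using hv.integrable_mul hp measurable_one fun z => by rw [Pi.one_apply, abs_one]

theorem abs_integral_mul_le (hv : IsSymbol decayWeight n p K v) (hp : p < d)
    (hG : ∀ z, |g z| ≤ G) :
    |∫ z, v z * g z| ≤ K * G * ∫ z : Fin d → ℝ, decayWeight z * singularSize z ^ p := by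
  rw [← integral_const_mul]
  exact norm_integral_le_of_norm_le
    ((integrable_decayWeight_mul_singularSize_pow hp).const_mul _)
    (hv.ae_norm_mul_le (by lia) hG)

end IsSymbol

theorem hasDerivAt_one_add_rpow {t : ℝ} (ht : 0 ≤ t) (a : ℝ) :
    HasDerivAt (fun s : ℝ => (1 + s) ^ a) (a * (1 + t) ^ (a - 1)) t := by
  simpa using ((hasDerivAt_id' t).const_add 1).rpow_const (p := a) (.inl (by positivity))

theorem partialDeriv_decayWeight (j : Fin d) (z : Fin d → ℝ) :
    partialDeriv j decayWeight z =
      -((d : ℝ) + 1) / 2 * (1 + euclidSq z) ^ (-((d : ℝ) + 1) / 2 - 1) * (2 * z j) :=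
  (partialDeriv_comp (hasDerivAt_one_add_rpow (euclidSq_nonneg z) _)
    (differentiable_euclidSq z) j).trans (by rw [partialDeriv_euclidSq])

theorem abs_partialDeriv_decayWeight_le (j : Fin d) (z : Fin d → ℝ) :
    |partialDeriv j decayWeight z| ≤ (d + 1) * decayWeight z := by
  have hpos : 0 < 1 + euclidSq z := add_pos_of_pos_of_nonneg one_pos (euclidSq_nonneg z)
  have hfac : |z j / (1 + euclidSq z)| ≤ 1 := by
    rw [abs_div, abs_of_pos hpos, div_le_one hpos]
    nlinarith [sq_apply_le_euclidSq z j, sq_abs (z j), sq_nonneg (|z j| - 1)]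
  have heq : partialDeriv j decayWeight z =
      -((d + 1) * decayWeight z * (z j / (1 + euclidSq z))) := by
    rw [partialDeriv_decayWeight, Real.rpow_sub_one hpos.ne', decayWeight]
    ring
  have hnn : 0 ≤ (d + 1) * decayWeight z := mul_nonneg (by positivity) (decayWeight_nonneg z)
  rw [heq, abs_neg, abs_mul, abs_of_nonneg hnn]
  exact mul_le_of_le_one_right hnn hfac

theorem isSymbol_decayWeight : IsSymbol (d := d) decayWeight 1 0 (d + 1) decayWeight := by
  have hnn (z : Fin d → ℝ) : 0 ≤ (d + 1) * decayWeight z :=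
    mul_nonneg (by positivity) (decayWeight_nonneg z)
  refine ⟨fun z _ => ?_, fun z _ => ?_, fun j => ⟨fun z _ => ?_, Continuous.continuousOn ?_⟩⟩
  · rw [abs_of_nonneg (decayWeight_nonneg z), pow_zero, mul_one]
    exact le_mul_of_one_le_left (decayWeight_nonneg z) (by linarith [d.cast_nonneg (α := ℝ)])
  · exact ((hasDerivAt_one_add_rpow (euclidSq_nonneg z) _).differentiableAt).comp z
      (differentiable_euclidSq z)
  · exact (abs_partialDeriv_decayWeight_le j z).trans
      (le_mul_of_one_le_right (hnn z) (one_le_pow₀ (one_le_singularSize z)))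
  · have hrpow : Continuous fun z : Fin d → ℝ =>
        (1 + euclidSq z) ^ (-((d : ℝ) + 1) / 2 - 1) :=
      (continuous_const.add differentiable_euclidSq.continuous).rpow_const
        fun z => .inl (add_pos_of_pos_of_nonneg one_pos (euclidSq_nonneg z)).ne'
    rw [funext (partialDeriv_decayWeight j)]
    fun_prop

theorem exists_isSymbol_decayWeight_mul_singularSize_pow (l : ℕ) :
    ∃ K : ℝ, IsSymbol (d := d) decayWeight 1 (2 * l) K fun z =>
      decayWeight z * singularSize z ^ (2 * l) := by
  induction l with
  | zero => exact ⟨d + 1, by simpa using isSymbol_decayWeight (d := d)⟩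
  | succ l ih =>
    obtain ⟨K, hK⟩ := ih
    obtain ⟨L, -, hL, -⟩ := exists_isSymbol_inv_euclidSq (d := d) 1
    have hone : IsSymbol (d := d) 1 1 2 1 fun _ => 1 := by
      refine .of_contDiff (fun _ => zero_le_one) zero_le_one contDiff_const fun k hk z => ?_
      rcases k.eq_zero_or_pos with rfl | hk0
      · simp
      · simp [iteratedFDeriv_const_of_ne hk0.ne']
    refine ⟨_, (hK.mul (hone.add hL)).congr fun z _ => ?_⟩
    rw [← singularSize_sq z]
    ring

/-! ### Integration by parts along the gradient of a quadratic form -/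

section LevelField

variable (A : Matrix (Fin d) (Fin d) ℝ)

open Matrix in
/-- The vector field `b(z) = |z|⁻² A⁻¹ z`, normalised so that `b · ∇F = 1` off the origin for
the quadratic form `F` of `A`. -/
def levelField (z : Fin d → ℝ) : Fin d → ℝ := (euclidSq z)⁻¹ • (z ᵥ* A⁻¹)

/-- The operator `v ↦ div (v b)`, with `b = levelField A`; minus it is the formal adjoint of the
derivative along `b`. -/
def levelDivergence (v : (Fin d → ℝ) → ℝ) (z : Fin d → ℝ) : ℝ :=
  ∑ j, partialDeriv j (fun y => v y * levelField A y j) z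

theorem levelField_apply (z : Fin d → ℝ) (j : Fin d) :
    levelField A z j = ∑ k, A⁻¹ k j * (z k * (euclidSq z)⁻¹) := by
  simp only [levelField, Pi.smul_apply, Matrix.vecMul, dotProduct, smul_eq_mul, Finset.mul_sum]
  exact Finset.sum_congr rfl fun k _ => by ring

open Matrix in
theorem levelField_dotProduct_mulVec {A : Matrix (Fin d) (Fin d) ℝ} (hdet : A.det ≠ 0)
    {z : Fin d → ℝ} (hz : z ≠ 0) : levelField A z ⬝ᵥ A *ᵥ z = 1 := by
  rw [levelField, smul_dotProduct, ← dotProduct_mulVec, mulVec_mulVec,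
    nonsing_inv_mul _ (isUnit_iff_ne_zero.2 hdet), one_mulVec, smul_eq_mul,
    show z ⬝ᵥ z = euclidSq z by simp [dotProduct, euclidSq, sq],
    inv_mul_cancel₀ (euclidSq_pos hz).ne']

theorem exists_isSymbol_levelField (n : ℕ) : ∃ L : Fin d → ℝ, 0 ≤ L ∧
    ∀ j, IsSymbol 1 n 1 (L j) fun z => levelField A z j := by
  obtain ⟨K, hK, -, hz⟩ := exists_isSymbol_inv_euclidSq (d := d) n
  refine ⟨fun j => ∑ k, |A⁻¹ k j| * K, fun j => by simp only [Pi.zero_apply]; positivity,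
    fun j => ?_⟩
  simp only [levelField_apply]
  exact .sum _ fun k => (hz k).const_mul _

theorem exists_isSymbol_levelDivergence (n : ℕ) : ∃ C : ℝ, 0 ≤ C ∧
    ∀ {W : (Fin d → ℝ) → ℝ} {p : ℕ} {K : ℝ} {v : (Fin d → ℝ) → ℝ},
      IsSymbol W (n + 1) p K v → IsSymbol W n (p + 2) (C * K) (levelDivergence A v) := by
  obtain ⟨L, hL0, hL⟩ := exists_isSymbol_levelField A (n + 1)
  refine ⟨∑ j, 2 ^ (n + 1) * L j, Finset.sum_nonneg fun j _ => mul_nonneg (by positivity) (hL0 j),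
    fun {W p K v} hv => ?_⟩
  have hsum := IsSymbol.sum Finset.univ fun j => (hv.mul (hL j)).partialDeriv j
  have hconst : (∑ j, 2 ^ (n + 1) * L j) * K = ∑ j, 2 ^ (n + 1) * (K * L j) := by
    rw [Finset.sum_mul]
    exact Finset.sum_congr rfl fun j _ => by ring
  exact hconst ▸ hsum

theorem abs_dotProduct_le (u z : Fin d → ℝ) : |dotProduct u z| ≤ (∑ i, |u i|) * ‖z‖ := by
  rw [dotProduct, Finset.sum_mul]
  refine (Finset.abs_sum_le_sum_abs _ _).trans (Finset.sum_le_sum fun i _ => ?_)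
  rw [abs_mul]
  exact mul_le_mul_of_nonneg_left (norm_le_pi_norm z i) (abs_nonneg _)

open Matrix in
theorem exists_abs_levelField_mul_mulVec_le (j : Fin d) :
    ∃ K, ∀ z : Fin d → ℝ, |levelField A z j * (A *ᵥ z) j| ≤ K := by
  refine ⟨(∑ k, |A⁻¹ k j|) * ∑ k, |A j k|, fun z => ?_⟩
  have hfield : |(z ᵥ* A⁻¹) j| ≤ (∑ k, |A⁻¹ k j|) * ‖z‖ := by
    rw [vecMul, dotProduct_comm]
    exact abs_dotProduct_le _ z
  have hgrad : |(A *ᵥ z) j| ≤ (∑ k, |A j k|) * ‖z‖ := abs_dotProduct_le (A j) z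
  have hq := inv_nonneg.2 (euclidSq_nonneg z)
  calc |levelField A z j * (A *ᵥ z) j|
      = (euclidSq z)⁻¹ * (|(z ᵥ* A⁻¹) j| * |(A *ᵥ z) j|) := by
        rw [levelField, Pi.smul_apply, smul_eq_mul, mul_assoc, abs_mul, abs_mul, abs_of_nonneg hq]
    _ ≤ (euclidSq z)⁻¹ * ((∑ k, |A⁻¹ k j|) * ‖z‖ * ((∑ k, |A j k|) * ‖z‖)) := by gcongr
    _ = (∑ k, |A⁻¹ k j|) * (∑ k, |A j k|) * (‖z‖ ^ 2 / euclidSq z) := by ring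
    _ ≤ (∑ k, |A⁻¹ k j|) * ∑ k, |A j k| :=
        mul_le_of_le_one_right (by positivity)
          (div_le_one_of_le₀ (norm_sq_le_euclidSq z) (euclidSq_nonneg z))

end LevelField

variable {A : Matrix (Fin d) (Fin d) ℝ}

theorem differentiable_FqR : Differentiable ℝ (FqR A) := by
  unfold FqR
  fun_prop

open Matrix in
theorem partialDeriv_FqR (hA : A.IsSymm) (j : Fin d) (z : Fin d → ℝ) :
    partialDeriv j (FqR A) z = (A *ᵥ z) j := by
  have hterm (i k : Fin d) : partialDeriv j (fun y => A i k * y i * y k) z =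
      A i k * (if i = j then 1 else 0) * z k + A i k * z i * (if k = j then 1 else 0) := by
    rw [partialDeriv_mul (by fun_prop) (by fun_prop), partialDeriv_const_mul (by fun_prop),
      partialDeriv_apply, partialDeriv_apply]
  have hcol : ∑ i, A i j * z i = ∑ k, A j k * z k :=
    Finset.sum_congr rfl fun i _ => by rw [hA.apply]
  have hrow (i : Fin d) : partialDeriv j (fun y => ∑ k, A i k * y i * y k) z =
      (if i = j then ∑ k, A i k * z k else 0) + A i j * z i := by
    rw [partialDeriv_sum (fun _ _ => by fun_prop)]
    simp [hterm, Finset.sum_add_distrib]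
  unfold FqR
  rw [partialDeriv_const_mul (by fun_prop), partialDeriv_sum (fun _ _ => by fun_prop)]
  simp only [hrow, Finset.sum_add_distrib, hcol, Finset.sum_ite_eq', Finset.mem_univ, if_true,
    mulVec, dotProduct]
  ring

/-- The function `F - m` with `F` the quadratic form of `A`, written `F^m` in the paper. -/
def levelForm (A : Matrix (Fin d) (Fin d) ℝ) (m : ℝ) (z : Fin d → ℝ) : ℝ := FqR A z - m

theorem differentiable_levelForm (m : ℝ) : Differentiable ℝ (levelForm A m) :=
  differentiable_FqR.sub_const m

theorem measurable_levelForm (m : ℝ) : Measurable (levelForm A m) :=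
  (differentiable_levelForm m).continuous.measurable

open Matrix in
theorem partialDeriv_comp_levelForm_div (hA : A.IsSymm) {Φ : ℝ → ℝ} (hΦ : Differentiable ℝ Φ)
    (m x : ℝ) (j : Fin d) (z : Fin d → ℝ) :
    partialDeriv j (fun y => Φ (levelForm A m y / x)) z =
      x⁻¹ * deriv Φ (levelForm A m z / x) * (A *ᵥ z) j := by
  have hdiv : HasDerivAt (fun t => Φ ((t - m) / x)) (deriv Φ ((FqR A z - m) / x) * (1 / x))
      (FqR A z) :=
    (hΦ ((FqR A z - m) / x)).hasDerivAt.comp (FqR A z)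
      (((hasDerivAt_id' (FqR A z)).sub_const m).div_const x)
  rw [← partialDeriv_FqR hA, mul_comm x⁻¹, ← one_div]
  exact partialDeriv_comp hdiv (differentiable_FqR z) j

section IntegrationByParts

variable {v : (Fin d → ℝ) → ℝ} {p : ℕ} {K : ℝ}

theorem integrable_partialDeriv_mul_levelField_mul (hv : IsSymbol decayWeight 1 p K v)
    (hp : p + 2 < d) {k : (Fin d → ℝ) → ℝ} (hk : Measurable k) {G : ℝ} (hG : ∀ z, |k z| ≤ G)
    (j : Fin d) :
    Integrable fun z => partialDeriv j (fun y => v y * levelField A y j) z * k z := by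
  obtain ⟨L, -, hL⟩ := exists_isSymbol_levelField A 1
  exact ((hv.mul (hL j)).partialDeriv j).integrable_mul hp hk hG

open Matrix in
theorem integrable_mul_levelField_mul_mulVec (hv : IsSymbol decayWeight 1 p K v)
    (hp : p < d) {k : (Fin d → ℝ) → ℝ} (hk : Measurable k) {G : ℝ} (hG : ∀ z, |k z| ≤ G)
    (j : Fin d) :
    Integrable fun z => v z * (levelField A z j * (A *ᵥ z) j * k z) := by
  obtain ⟨L, -, hL⟩ := exists_isSymbol_levelField A 0
  obtain ⟨B, hB⟩ := exists_abs_levelField_mul_mulVec_le A j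
  have hb := measurable_of_continuousOn_compl_zero (hL j).continuousOn
  have hAz : Measurable fun z : Fin d → ℝ => (A *ᵥ z) j := by
    unfold mulVec dotProduct
    fun_prop
  refine hv.integrable_mul hp ((hb.mul hAz).mul hk) (G := B * G) fun z => ?_
  rw [abs_mul]
  exact mul_le_mul (hB z) (hG z) (abs_nonneg _) ((abs_nonneg _).trans (hB z))

variable {Φ : ℝ → ℝ} {G G' : ℝ}

theorem integrable_levelDerivative (hv : IsSymbol decayWeight 1 p K v) (hp : p < d)
    (hG' : ∀ t, |deriv Φ t| ≤ G') (m x : ℝ) (j : Fin d) :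
    Integrable fun z => v z *
      (levelField A z j * (A.mulVec z) j * (x⁻¹ * deriv Φ (levelForm A m z / x))) := by
  refine integrable_mul_levelField_mul_mulVec hv hp
    (((measurable_deriv Φ).comp ((measurable_levelForm m).div_const x)).const_mul _)
    (G := |x⁻¹| * G') (fun z => ?_) j
  rw [abs_mul]
  exact mul_le_mul_of_nonneg_left (hG' _) (abs_nonneg _)

open Matrix in
theorem integral_partialDeriv_mul_levelField (hA : A.IsSymm)
    (hv : IsSymbol decayWeight 1 p K v) (hp : p + 2 < d) (hΦ : Differentiable ℝ Φ)
    (hG : ∀ t, |Φ t| ≤ G) (hG' : ∀ t, |deriv Φ t| ≤ G') (m x : ℝ) (j : Fin d) :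
    ∫ z, partialDeriv j (fun y => v y * levelField A y j) z * Φ (levelForm A m z / x) =
      -∫ z, v z * (levelField A z j * (A *ᵥ z) j * (x⁻¹ * deriv Φ (levelForm A m z / x))) := by
  obtain ⟨L, -, hL⟩ := exists_isSymbol_levelField A 1
  have hvb := hv.mul (hL j)
  have hΦF : Differentiable ℝ fun z => Φ (levelForm A m z / x) := fun z =>
    (hΦ _).comp z ((differentiable_levelForm m z).mul_const x⁻¹)
  have hΦF' := hΦF.continuous.measurable
  have hflux := hvb.integrable_mul (by lia) hΦF' fun z => hG _
  have hdiv := integrable_partialDeriv_mul_levelField_mul (A := A) hv hp hΦF' (fun z => hG _) j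
  have hderiv := integrable_levelDerivative (A := A) hv (by lia) hG' m x j
  have hprod : ∀ᵐ z, partialDeriv j (fun y => v y * levelField A y j *
      Φ (levelForm A m y / x)) z = partialDeriv j (fun y => v y * levelField A y j) z *
        Φ (levelForm A m z / x) +
          v z * (levelField A z j * (A *ᵥ z) j * (x⁻¹ * deriv Φ (levelForm A m z / x))) := by
    filter_upwards [ae_ne_zero_pi (by lia)] with z hz
    rw [partialDeriv_mul (hvb.differentiableAt hz) (hΦF z), partialDeriv_comp_levelForm_div hA hΦ]
    ring
  rw [eq_neg_iff_add_eq_zero, ← integral_add hdiv hderiv, ← integral_congr_ae hprod]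
  exact integral_partialDeriv_eq_zero (by lia) j
    (fun z hz => (hvb.differentiableAt hz).mul (hΦF z)) hflux
    ((hdiv.add hderiv).congr (EventuallyEq.symm hprod))

theorem levelAverage_deriv (hA : A.IsSymm) (hdet : A.det ≠ 0)
    (hv : IsSymbol decayWeight 1 p K v) (hp : p + 2 < d) (hΦ : Differentiable ℝ Φ)
    (hG : ∀ t, |Φ t| ≤ G) (hG' : ∀ t, |deriv Φ t| ≤ G') (m x : ℝ) :
    levelAverage (deriv Φ) (levelForm A m) v x =
      -∫ z, levelDivergence A v z * Φ (levelForm A m z / x) := by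
  have hΦF : Measurable fun z => Φ (levelForm A m z / x) :=
    hΦ.continuous.measurable.comp ((measurable_levelForm m).div_const x)
  have hdiv := integrable_partialDeriv_mul_levelField_mul (A := A) hv hp hΦF fun z => hG _
  simp only [levelDivergence, Finset.sum_mul]
  rw [integral_finsetSum _ fun j _ => hdiv j,
    Finset.sum_congr rfl fun j _ => integral_partialDeriv_mul_levelField hA hv hp hΦ hG hG' m x j,
    Finset.sum_neg_distrib, neg_neg,
    ← integral_finsetSum _ fun j _ => integrable_levelDerivative hv (by lia) hG' m x j]
  refine integral_congr_ae ?_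
  filter_upwards [ae_ne_zero_pi (by lia)] with z hz
  rw [← Finset.mul_sum, ← Finset.sum_mul]
  have hunit : ∑ j, levelField A z j * A.mulVec z j = 1 := levelField_dotProduct_mulVec hdet hz
  rw [hunit, one_mul]

end IntegrationByParts

/-! ### Decay of averages against kernels with vanishing moments -/

-- The Cauchy kernel is the derivative of the bounded function `arctan`, so one integration by
-- parts bounds its averages uniformly in the width.
theorem exists_levelAverage_cauchy_le (hA : A.IsSymm) (hdet : A.det ≠ 0) (m : ℝ) {l : ℕ}
    (hl : 2 * l + 2 < d) : ∃ C : ℝ, ∀ x,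
      levelAverage (fun t => (1 + t ^ 2)⁻¹) (levelForm A m)
        (fun z => decayWeight z * singularSize z ^ (2 * l)) x ≤ C := by
  obtain ⟨K, hK⟩ := exists_isSymbol_decayWeight_mul_singularSize_pow (d := d) l
  obtain ⟨C, -, hC⟩ := exists_isSymbol_levelDivergence A 0
  have hderiv : deriv Real.arctan = fun t => (1 + t ^ 2)⁻¹ :=
    funext fun t => (Real.hasDerivAt_arctan' t).deriv
  have harctan (t : ℝ) : |Real.arctan t| ≤ Real.pi / 2 :=
    abs_le.2 ⟨(Real.neg_pi_div_two_lt_arctan t).le, (Real.arctan_lt_pi_div_two t).le⟩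
  have hcauchy (t : ℝ) : |deriv Real.arctan t| ≤ 1 := by
    rw [hderiv, abs_of_nonneg (by positivity)]
    exact inv_le_one_of_one_le₀ (le_add_of_nonneg_right (sq_nonneg t))
  refine ⟨C * K * (Real.pi / 2) *
    ∫ z : Fin d → ℝ, decayWeight z * singularSize z ^ (2 * l + 2), fun x => ?_⟩
  rw [← hderiv, levelAverage_deriv hA hdet hK hl Real.differentiable_arctan harctan hcauchy]
  exact (neg_le_abs _).trans ((hC hK).abs_integral_mul_le hl fun z => harctan _)

theorem exists_abs_levelAverage_le (hA : A.IsSymm) (hdet : A.det ≠ 0) (m : ℝ) {l : ℕ}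
    (hl : 2 * l + 2 < d) {g : ℝ → ℝ} (hg : HasRapidDecay g) :
    ∃ C : ℝ, ∀ {n : ℕ} {K : ℝ} {v : (Fin d → ℝ) → ℝ}, 0 ≤ K →
      IsSymbol decayWeight n (2 * l) K v → ∀ x > 0,
        |levelAverage g (levelForm A m) v x| ≤ C * K := by
  obtain ⟨C, hC⟩ := exists_levelAverage_cauchy_le hA hdet m hl
  obtain ⟨B, hB⟩ := hg.exists_le_inv_one_add_sq 0
  have hB0 : 0 ≤ B := by simpa using (abs_nonneg _).trans (by simpa using hB 0)
  refine ⟨B * C, fun {n K v} hK hv x hx => ?_⟩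
  have hint : Integrable fun z : Fin d → ℝ => decayWeight z * singularSize z ^ (2 * l) *
      (x⁻¹ * (1 + (levelForm A m z / x) ^ 2)⁻¹) := by
    refine (integrable_decayWeight_mul_singularSize_pow (by lia)).mul_bdd (c := x⁻¹)
      (Measurable.aestronglyMeasurable ?_) (.of_forall fun z => ?_)
    · have := measurable_levelForm (A := A) m
      fun_prop
    · rw [Real.norm_of_nonneg (by positivity)]
      exact mul_le_of_le_one_right (by positivity)
        (inv_le_one_of_one_le₀ (le_add_of_nonneg_right (sq_nonneg _)))
  have hpoint : ∀ᵐ z, ‖v z * (x⁻¹ * g (levelForm A m z / x))‖ ≤ K * B *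
      (decayWeight z * singularSize z ^ (2 * l) * (x⁻¹ * (1 + (levelForm A m z / x) ^ 2)⁻¹)) := by
    filter_upwards [ae_ne_zero_pi (by lia)] with z hz
    have hgz : |g (levelForm A m z / x)| ≤ B * (1 + (levelForm A m z / x) ^ 2)⁻¹ := by
      simpa using hB (levelForm A m z / x)
    rw [Real.norm_eq_abs, abs_mul, abs_mul, abs_of_pos (inv_pos.2 hx)]
    refine (mul_le_mul (hv.abs_le hz) (mul_le_mul_of_nonneg_left hgz (inv_pos.2 hx).le)
      (by positivity) ((abs_nonneg _).trans (hv.abs_le hz))).trans_eq ?_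
    ring
  calc |levelAverage g (levelForm A m) v x|
      ≤ ∫ z, K * B * (decayWeight z * singularSize z ^ (2 * l) *
          (x⁻¹ * (1 + (levelForm A m z / x) ^ 2)⁻¹)) :=
        norm_integral_le_of_norm_le (hint.const_mul _) hpoint
    _ = K * B * levelAverage (fun t => (1 + t ^ 2)⁻¹) (levelForm A m)
          (fun z => decayWeight z * singularSize z ^ (2 * l)) x := integral_const_mul _ _
    _ ≤ K * B * C := mul_le_mul_of_nonneg_left (hC x) (by positivity)
    _ = B * C * K := by ring

theorem levelAverage_eq_neg_mul_levelAverage_primitive (hA : A.IsSymm) (hdet : A.det ≠ 0)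
    {v : (Fin d → ℝ) → ℝ} {p : ℕ} {K : ℝ} (hv : IsSymbol decayWeight 1 p K v) (hp : p + 2 < d)
    {g : ℝ → ℝ} (hg : HasRapidDecay g) (h0 : ∫ y, g y = 0) (m : ℝ) {x : ℝ} (hx : x ≠ 0) :
    levelAverage g (levelForm A m) v x =
      -(x * levelAverage (primitive g) (levelForm A m) (levelDivergence A v) x) := by
  have hprim (t : ℝ) := hasDerivAt_primitive hg.continuous hg.integrable t
  have hderiv : deriv (primitive g) = g := funext fun t => (hprim t).deriv
  obtain ⟨G, hG⟩ := (hg.primitive_of_integral_eq_zero h0).decay 0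
  obtain ⟨G', hG'⟩ := hg.decay 0
  simp only [pow_zero, one_mul] at hG hG'
  have hparts := levelAverage_deriv hA hdet hv hp
    (fun t => (hprim t).differentiableAt) hG (hderiv ▸ hG') m x
  rw [hderiv] at hparts
  rw [hparts, levelAverage, ← integral_const_mul]
  congr 2 with z
  field_simp

theorem exists_abs_levelAverage_le_pow (hA : A.IsSymm) (hdet : A.det ≠ 0) (m : ℝ) {M l : ℕ}
    (hMl : 2 * l + 2 * M + 2 < d) {g : ℝ → ℝ} (hg : HasRapidDecay g)
    (hmom : ∀ i < M, ∫ y, y ^ i * g y = 0) :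
    ∃ C : ℝ, ∀ {K : ℝ} {v : (Fin d → ℝ) → ℝ}, 0 ≤ K → IsSymbol decayWeight M (2 * l) K v →
      ∀ x > 0, |levelAverage g (levelForm A m) v x| ≤ C * K * x ^ M := by
  induction M generalizing l g with
  | zero =>
    obtain ⟨C, hC⟩ := exists_abs_levelAverage_le hA hdet m (l := l) (by lia) hg
    exact ⟨C, fun hK hv x hx => by simpa using hC hK hv x hx⟩
  | succ M ih =>
    have h0 : ∫ y, g y = 0 := by simpa using hmom 0 M.succ_pos
    have hmom' (i : ℕ) (hi : i < M) : ∫ y, y ^ i * primitive g y = 0 := by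
      rw [hg.integral_pow_mul_primitive h0, hmom (i + 1) (by lia), neg_zero, zero_div]
    obtain ⟨C, hC⟩ := ih (l := l + 1) (by lia) (hg.primitive_of_integral_eq_zero h0) hmom'
    obtain ⟨D, hD, hdiv⟩ := exists_isSymbol_levelDivergence A M
    refine ⟨C * D, fun {K v} hK hv x hx => ?_⟩
    rw [levelAverage_eq_neg_mul_levelAverage_primitive hA hdet (hv.of_le (by lia)) (by lia) hg h0 m
      hx.ne', abs_neg, abs_mul, abs_of_pos hx]
    calc x * |levelAverage (primitive g) (levelForm A m) (levelDivergence A v) x|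
        ≤ x * (C * (D * K) * x ^ M) := by
          gcongr
          exact hC (by positivity) (hdiv hv) x hx
      _ = C * D * K * x ^ (M + 1) := by ring

/-! ### Comparison with the singular integral -/

theorem tendsto_levelAverage_hKernel (hA : A.IsSymm) (hdet : A.det ≠ 0) (hd : 4 < d) {m K : ℝ}
    {v : (Fin d → ℝ) → ℝ} (hK : 0 ≤ K) (hv : IsSymbol decayWeight 1 0 K v) {σ : ℝ}
    (hσ : Tendsto (shellAverage (levelForm A m) v) (𝓝[>] 0) (𝓝 σ)) :
    Tendsto (levelAverage hKernel (levelForm A m) v) (𝓝[>] 0) (𝓝 σ) := by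
  have hvint := hv.integrable (by lia)
  have hF := measurable_levelForm (A := A) m
  have hmass : ∫ y, (hKernel y - tent y) = 0 := by
    rw [integral_sub hasRapidDecay_hKernel.integrable hasRapidDecay_tent.integrable,
      integral_hKernel, integral_tent, sub_self]
  obtain ⟨C, hC⟩ := exists_abs_levelAverage_le_pow hA hdet m (M := 1) (l := 0) (by lia)
    (hasRapidDecay_hKernel.sub hasRapidDecay_tent) (by simpa using hmass)
  have hdiff : Tendsto (fun x => levelAverage hKernel (levelForm A m) v x -
      levelAverage tent (levelForm A m) v x) (𝓝[>] 0) (𝓝 0) := by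
    refine squeeze_zero_norm' (a := fun x => C * K * x ^ 1) ?_ ?_
    · filter_upwards [self_mem_nhdsWithin] with x hx
      rw [← levelAverage_sub hasRapidDecay_hKernel hasRapidDecay_tent hF hvint]
      exact hC hK hv x hx
    · exact tendsto_nhdsWithin_of_tendsto_nhds (Continuous.tendsto' (by fun_prop) _ _ (by simp))
  simpa using hdiff.add (tendsto_levelAverage_tent hF hvint hσ)

theorem exists_abs_levelAverage_hKernel_sub_le_const (hA : A.IsSymm) (hdet : A.det ≠ 0)
    (hd : 2 < d) (m : ℝ) : ∃ C : ℝ, ∀ {K : ℝ} {v : (Fin d → ℝ) → ℝ} {σ : ℝ}, 0 ≤ K →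
      IsSymbol decayWeight 0 0 K v →
      Tendsto (shellAverage (levelForm A m) v) (𝓝[>] 0) (𝓝 σ) → ∀ x > 0,
        |levelAverage hKernel (levelForm A m) v x - σ| ≤ C * K := by
  obtain ⟨C, hC⟩ := exists_abs_levelAverage_le hA hdet m (l := 0) (by lia) hasRapidDecay_hKernel
  obtain ⟨C', hC'⟩ := exists_abs_levelAverage_le hA hdet m (l := 0) (by lia) hasRapidDecay_tent
  refine ⟨C + C', fun {K v σ} hK hv hσ x hx => ?_⟩
  have htent := tendsto_levelAverage_tent (measurable_levelForm m) (hv.integrable (by lia)) hσ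
  have hσK : |σ| ≤ C' * K := le_of_tendsto htent.abs <| by
    filter_upwards [self_mem_nhdsWithin] with y hy using hC' hK hv y hy
  calc |levelAverage hKernel (levelForm A m) v x - σ|
      ≤ |levelAverage hKernel (levelForm A m) v x| + |σ| := abs_sub _ _
    _ ≤ C * K + C' * K := add_le_add (hC hK hv x hx) hσK
    _ = (C + C') * K := by ring

-- `dyadicKernel` has no moments at all, so consecutive dyadic scales differ by `O(x ^ M)`;
-- telescoping down to scale zero costs only a factor two.
theorem exists_abs_levelAverage_hKernel_sub_le (hA : A.IsSymm) (hdet : A.det ≠ 0) {M : ℕ}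
    (hM : 2 * M + 2 < d) (m : ℝ) : ∃ C : ℝ, ∀ {K : ℝ} {v : (Fin d → ℝ) → ℝ} {σ : ℝ}, 0 ≤ K →
      IsSymbol decayWeight M 0 K v →
      Tendsto (shellAverage (levelForm A m) v) (𝓝[>] 0) (𝓝 σ) → ∀ x > 0,
        |levelAverage hKernel (levelForm A m) v x - σ| ≤ C * K * x ^ M := by
  rcases M.eq_zero_or_pos with rfl | hMpos
  · simpa using exists_abs_levelAverage_hKernel_sub_le_const hA hdet hM m
  obtain ⟨C, hC⟩ := exists_abs_levelAverage_le_pow hA hdet m (M := M) (l := 0) (by lia)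
    hasRapidDecay_dyadicKernel fun i _ => integral_pow_mul_dyadicKernel i
  refine ⟨2 * C, fun {K v σ} hK hv hσ x hx => ?_⟩
  have hhalf (x : ℝ) (hx : 0 < x) : |levelAverage hKernel (levelForm A m) v x -
      levelAverage hKernel (levelForm A m) v (x / 2)| ≤ C * K * x ^ M := by
    rw [levelAverage_half, ← levelAverage_sub hasRapidDecay_hKernel
      (hasRapidDecay_hKernel.mul_comp_mul two_ne_zero) (measurable_levelForm m)
      (hv.integrable (by lia))]
    exact hC hK hv x hx
  rw [mul_assoc 2]
  exact abs_sub_le_of_abs_sub_half_le hMpos.ne'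
    (tendsto_levelAverage_hKernel hA hdet (by lia) hK (hv.of_le hMpos) hσ) hhalf hx

theorem integral_mul_hFun {X : Type*} [MeasureSpace X] {F w : X → ℝ} (hF : Measurable F)
    (hw : Integrable w) {x : ℝ} (hx : 0 < x) : ∫ z, w z * hFun x (F z) =
      (omegaSum x - omegaLogMass) / x * (∫ z, w z) + levelAverage hKernel F w x := by
  rw [levelAverage, ← integral_const_mul, ← integral_add (hw.const_mul _)
    (hasRapidDecay_hKernel.integrable_mul_comp_div hF hw)]
  congr 1 with z
  rw [hFun_eq_add_hKernel hx]
  ring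

theorem exists_abs_integral_mul_hFun_sub_le (hA : A.IsSymm) (hdet : A.det ≠ 0) {M : ℕ}
    (hM : 2 * M + 2 < d) (m : ℝ) : ∃ C : ℝ, ∀ {K : ℝ} {v : (Fin d → ℝ) → ℝ} {σ : ℝ}, 0 ≤ K →
      IsSymbol decayWeight M 0 K v →
      Tendsto (shellAverage (levelForm A m) v) (𝓝[>] 0) (𝓝 σ) → ∀ x > 0,
        |(∫ z, v z * hFun x (levelForm A m z)) - σ| ≤ C * K * x ^ M := by
  obtain ⟨B, hB0, hB⟩ := exists_abs_omegaSum_sub_le M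
  obtain ⟨C, hC⟩ := exists_abs_levelAverage_hKernel_sub_le hA hdet hM m
  set J := ∫ z : Fin d → ℝ, decayWeight z with hJ
  refine ⟨B * J + C, fun {K v σ} hK hv hσ x hx => ?_⟩
  have hdefect : |(omegaSum x - omegaLogMass) / x| ≤ B * x ^ M := by
    rw [abs_div, abs_of_pos hx, div_le_iff₀ hx, mul_assoc, ← pow_succ]
    exact hB x hx
  have hmass : |∫ z, v z| ≤ K * J := by
    simpa [hJ] using hv.abs_integral_mul_le (g := fun _ => 1) (by lia) fun _ => abs_one.le
  rw [integral_mul_hFun (measurable_levelForm m) (hv.integrable (by lia)) hx, add_sub_assoc]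
  calc |(omegaSum x - omegaLogMass) / x * (∫ z, v z) +
        (levelAverage hKernel (levelForm A m) v x - σ)|
      ≤ |(omegaSum x - omegaLogMass) / x| * |∫ z, v z| +
        |levelAverage hKernel (levelForm A m) v x - σ| := by
        rw [← abs_mul]
        exact abs_add_le _ _
    _ ≤ B * x ^ M * (K * J) + C * K * x ^ M := by
        gcongr
        exact hC hK hv hσ x hx
    _ = (B * J + C) * K * x ^ M := by ring

section WeightedNorm

variable {M : ℕ} {w : (Fin d → ℝ) → ℝ}

theorem one_le_jap (z : Fin d → ℝ) : 1 ≤ jap z := le_max_left _ _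

theorem wNorm_nonneg {s : ℝ} (hw : MemC M s w) : 0 ≤ wNorm M s w :=
  (mul_nonneg (norm_nonneg _) (Real.rpow_nonneg (zero_le_one.trans (one_le_jap 0)) s)).trans
    (le_csSup hw.2 ⟨0, 0, M.zero_le, rfl⟩)

theorem one_add_euclidSq_le (z : Fin d → ℝ) : 1 + euclidSq z ≤ (1 + d) * jap z ^ 2 := by
  have hcoord (i : Fin d) : z i ^ 2 ≤ jap z ^ 2 :=
    sq_le_sq' (abs_le.1 ((norm_le_pi_norm z i).trans (le_max_right _ _))).1
      (abs_le.1 ((norm_le_pi_norm z i).trans (le_max_right _ _))).2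
  calc 1 + euclidSq z ≤ jap z ^ 2 + ∑ _i : Fin d, jap z ^ 2 :=
        add_le_add (one_le_pow₀ (one_le_jap z)) (Finset.sum_le_sum fun i _ => hcoord i)
    _ = (1 + d) * jap z ^ 2 := by simp [add_mul]

theorem one_le_mul_decayWeight_mul_jap (z : Fin d → ℝ) :
    1 ≤ (1 + d : ℝ) ^ (((d : ℝ) + 1) / 2) * decayWeight z * jap z ^ ((d : ℝ) + 1) := by
  have hpos : 0 < 1 + euclidSq z := add_pos_of_pos_of_nonneg one_pos (euclidSq_nonneg z)
  have hjap : 0 ≤ jap z := zero_le_one.trans (one_le_jap z)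
  calc 1 ≤ ((1 + d) * jap z ^ 2 / (1 + euclidSq z)) ^ (((d : ℝ) + 1) / 2) :=
        Real.one_le_rpow ((one_le_div hpos).2 (one_add_euclidSq_le z)) (by positivity)
    _ = (1 + d : ℝ) ^ (((d : ℝ) + 1) / 2) * decayWeight z * jap z ^ ((d : ℝ) + 1) := by
        rw [Real.div_rpow (by positivity) hpos.le, Real.mul_rpow (by positivity) (by positivity),
          ← Real.rpow_natCast_mul hjap, decayWeight, neg_div, Real.rpow_neg hpos.le]
        push_cast
        rw [mul_div_cancel₀ _ two_ne_zero]
        ring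

theorem isSymbol_of_memC (hw : MemC M ((d : ℝ) + 1) w) : IsSymbol decayWeight M 0
    ((1 + d : ℝ) ^ (((d : ℝ) + 1) / 2) * wNorm M ((d : ℝ) + 1) w) w := by
  refine .of_contDiff decayWeight_nonneg (mul_nonneg (by positivity) (wNorm_nonneg hw)) hw.1
    fun k hk z => ?_
  have hnorm : ‖iteratedFDeriv ℝ k w z‖ * jap z ^ ((d : ℝ) + 1) ≤ wNorm M ((d : ℝ) + 1) w :=
    le_csSup hw.2 ⟨k, z, hk, rfl⟩
  have hweight : 0 ≤ (1 + d : ℝ) ^ (((d : ℝ) + 1) / 2) * decayWeight z :=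
    mul_nonneg (by positivity) (decayWeight_nonneg z)
  calc ‖iteratedFDeriv ℝ k w z‖
      ≤ ‖iteratedFDeriv ℝ k w z‖ *
        ((1 + d : ℝ) ^ (((d : ℝ) + 1) / 2) * decayWeight z * jap z ^ ((d : ℝ) + 1)) :=
        le_mul_of_one_le_right (norm_nonneg _) (one_le_mul_decayWeight_mul_jap z)
    _ = (1 + d : ℝ) ^ (((d : ℝ) + 1) / 2) * decayWeight z *
        (‖iteratedFDeriv ℝ k w z‖ * jap z ^ ((d : ℝ) + 1)) := by ring
    _ ≤ (1 + d : ℝ) ^ (((d : ℝ) + 1) / 2) * decayWeight z * wNorm M ((d : ℝ) + 1) w := by gcongr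
    _ = _ := by ring

end WeightedNorm

theorem rpow_mul_rpow_le {q L B δ : ℝ} (hq : 0 < q) (hL : 0 < L) (hδ : 0 ≤ δ)
    (hqL : q ≤ B * L) (a b : ℝ) :
    q ^ a * L ^ b ≤ B ^ δ * (q ^ (a - δ) * L ^ (b + δ)) := by
  have hB : 0 ≤ B := (pos_of_mul_pos_left (hq.trans_le hqL) hL.le).le
  calc q ^ a * L ^ b = q ^ δ * (q ^ (a - δ) * L ^ b) := by
        rw [← mul_assoc, ← Real.rpow_add hq, add_sub_cancel]
    _ ≤ (B * L) ^ δ * (q ^ (a - δ) * L ^ b) := by gcongr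
    _ = B ^ δ * (q ^ (a - δ) * L ^ (b + δ)) := by
        rw [Real.mul_rpow hB hL.le, Real.rpow_add hL]
        ring

theorem exists_abs_rpow_mul_integral_sub_le (hA : A.IsSymm) (hdet : A.det ≠ 0) {M : ℕ}
    (hM : 2 * M + 2 < d) (m : ℝ) : ∃ C : ℝ, 0 ≤ C ∧
      ∀ L > 0, ∀ q > 0, ∀ w : (Fin d → ℝ) → ℝ, MemC M ((d : ℝ) + 1) w →
        ∀ σ : ℝ, Tendsto (shellAverage (levelForm A m) w) (𝓝[>] 0) (𝓝 σ) →
          |L ^ (d : ℝ) * (∫ z, w z * hFun (q / L) (levelForm A m z)) - L ^ (d : ℝ) * σ| ≤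
            C * (q ^ (M : ℝ) * L ^ ((d : ℝ) - M)) * wNorm M ((d : ℝ) + 1) w := by
  obtain ⟨C, hC⟩ := exists_abs_integral_mul_hFun_sub_le hA hdet hM m
  set c : ℝ := (1 + d : ℝ) ^ (((d : ℝ) + 1) / 2)
  have : 0 ≤ c := by positivity
  refine ⟨|C| * c, by positivity, fun L hL q hq w hw σ hσ => ?_⟩
  have hN := wNorm_nonneg hw
  have hscale : L ^ (d : ℝ) * (q / L) ^ M = q ^ (M : ℝ) * L ^ ((d : ℝ) - M) := by
    rw [div_pow, Real.rpow_sub hL, Real.rpow_natCast L M, Real.rpow_natCast q M, mul_div_left_comm]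
  rw [← mul_sub, abs_mul, abs_of_pos (Real.rpow_pos_of_pos hL _)]
  calc L ^ (d : ℝ) * |(∫ z, w z * hFun (q / L) (levelForm A m z)) - σ|
      ≤ L ^ (d : ℝ) * (|C| * (c * wNorm M ((d : ℝ) + 1) w) * (q / L) ^ M) := by
        gcongr
        refine (hC (by positivity) (isSymbol_of_memC hw) hσ _ (by positivity)).trans ?_
        gcongr
        exact le_abs_self C
    _ = |C| * c * (L ^ (d : ℝ) * (q / L) ^ M) * wNorm M ((d : ℝ) + 1) w := by ring
    _ = _ := by rw [hscale]

-- With `δ = 0` and `Cb = q / L` the bound is `C q^M L^(d-M) ‖w‖`, for all positive `q` and `L`.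
theorem stmt_10_general (hA : A.IsSymm) (hdet : A.det ≠ 0) {M : ℕ}
    (hM : (M : ℝ) < (d : ℝ) / 2 - 1) (m : ℝ) :
    ∃ C : ℝ, ∀ Cb : ℝ, ∀ δ ≥ 0, ∀ L > 0, ∀ q > 0, q ≤ Cb * L →
      ∀ w : (Fin d → ℝ) → ℝ, MemC M ((d : ℝ) + 1) w →
        ∀ σ : ℝ, Tendsto (shellAverage (levelForm A m) w) (𝓝[>] 0) (𝓝 σ) →
          |L ^ (d : ℝ) * (∫ z, w z * hFun (q / L) (levelForm A m z)) - L ^ (d : ℝ) * σ| ≤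
            C * Cb ^ δ * q ^ ((M : ℝ) - δ) * L ^ ((d : ℝ) - M + δ) * wNorm M ((d : ℝ) + 1) w := by
  have hMd : 2 * M + 2 < d := by
    have : (2 * M + 2 : ℝ) < d := by linarith
    exact_mod_cast this
  obtain ⟨C, hC, hbound⟩ := exists_abs_rpow_mul_integral_sub_le hA hdet hMd m
  refine ⟨C, fun Cb δ hδ L hL q hq hqL w hw σ hσ => (hbound L hL q hq w hw σ hσ).trans ?_⟩
  calc C * (q ^ (M : ℝ) * L ^ ((d : ℝ) - M)) * wNorm M ((d : ℝ) + 1) w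
      ≤ C * (Cb ^ δ * (q ^ ((M : ℝ) - δ) * L ^ ((d : ℝ) - M + δ))) * wNorm M ((d : ℝ) + 1) w :=
        mul_le_mul_of_nonneg_right
          (mul_le_mul_of_nonneg_left (rpow_mul_rpow_le hq hL hδ hqL _ _) hC) (wNorm_nonneg hw)
    _ = _ := by ring

/-- (Proposition on `I_q(0)`, part a), `d ≥ 5`):
`I_q(0;A,m,L) = L^d σ_∞(w;A,m) + O(q^{M−δ} L^{d−M+δ} ‖w‖_{M,d+1})`, where
`I_q(0;A,m,L) = L^d ∫ w(z) h(q/L, F(z)−m) dz`. -/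
theorem stmt_10 (d : ℕ) (hd : 5 ≤ d)
    (A : Matrix (Fin d) (Fin d) ℤ) (hA : A.IsSymm) (hdet : A.det ≠ 0)
    (heven : ∀ i, 2 ∣ A i i)
    (M : ℕ) (hM1 : 1 ≤ M) (hM : (M : ℝ) < (d : ℝ) / 2 - 1)
    (m : ℝ) (Cb : ℝ) (hCb : 0 < Cb) (δ : ℝ) (hδ : 0 < δ) :
    ∃ C : ℝ, ∀ L : ℝ, 1 ≤ L → ∀ q : ℝ, 0 < q → q ≤ Cb * L →
      ∀ w : (Fin d → ℝ) → ℝ, MemC M ((d : ℝ) + 1) w →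
        ∀ sigInf : ℝ, IsSigmaInf A m w sigInf →
          |L ^ (d : ℝ) * (∫ z : Fin d → ℝ, w z * hFun (q / L) (Fq A z - m)) -
              L ^ (d : ℝ) * sigInf| ≤
            C * q ^ ((M : ℝ) - δ) * L ^ ((d : ℝ) - M + δ) * wNorm M ((d : ℝ) + 1) w := by
  have hdetR : (A.map (Int.cast : ℤ → ℝ)).det ≠ 0 := by
    rw [← Int.cast_det]
    exact_mod_cast hdet
  obtain ⟨C, hC⟩ := stmt_10_general (hA.map (Int.cast : ℤ → ℝ)) hdetR hM m
  exact ⟨C * Cb ^ δ, fun L hL q hq => hC Cb δ hδ.le L (one_pos.trans_le hL) q hq⟩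

end
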